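/- arXiv:1506.04011 — 5 statements merged into one kernel-verified Lean document; each statement's English description precedes it below -/
import Mathlib

section
/- Let (D,*) be a finite-dimensional semisimple ℚ-algebra with involution, V a nonzero finite-dimensional right D-module, ψ : V × V → D a positive definite (D,*)-Hermitian form, and † the adjoint involution of E = End_D(V) with respect to ψ (so ψ(a(v), w) = ψ(v, a†(w)) for all v,w ∈ V, a ∈ E). Suppose q ∈ E satisfies q† = q and q is positive with respect to †, i.e. Tr(a†·q·a ; E) > 0 for all a ∈ E \ {0}. Then the form ψ_q defined by ψ_q(v, w) = ψ(v, q(w)) is a positive definite (D,*)-Hermitian form on V. -/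
/-!
The trace `B(v, w) = Tr ψ(v, w)`, symmetrized, is a positive definite symmetric `ℚ`-bilinear form
on `V` for which `†` is the adjoint, so `q` acts on `V` as a self-adjoint operator, and the claim is
that this operator is positive definite. By the spectral theorem this only depends on the
signs of its real eigenvalues (`pos_of_eigenvalue_pos`), and every such eigenvalue also occurs for
left multiplication by `q` on `E` (`hasEigenvalue_mulLeft`).

It remains to see that left multiplication by `q` has positive eigenvalues. The form
`F₀(a, b) = ∑ B(a vᵢ, b vᵢ)`, for a basis `vᵢ` of `V`, is positive definite on `E`, and left
multiplications by `a` and `a†` are adjoint for it. Hence `Tr(a†a ; E) > 0` for `a ≠ 0`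
(`trace_adjoint_mul_pos`), so `F(a, b) = Tr(a†b ; E)`, symmetrized, is positive definite as well.
Left multiplication by `q` is self-adjoint for `F`, and it is positive definite by the hypothesis
`Tr(a†qa ; E) > 0`; thus its real eigenvalues are positive (`real_eigenvalue_pos_of_pos`).

Both spectral lemmas pass to the base change to `ℝ`, where the form stays positive definite
(`baseChange_pos`). Comparing eigenvalues avoids any decomposition into isotypic components, on
which the traces over `D` and over `E` have different normalizations.
-/

open MulOpposite

/-- The trace of left multiplication by `x` on the finite-dimensional `ℚ`-algebra `A`. -/
noncomputable def algTraceQ (A : Type*) [Ring A] [Algebra ℚ A] (x : A) : ℚ :=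
  LinearMap.trace ℚ A (LinearMap.mulLeft ℚ x)

/-- `st` is an involution of the `ℚ`-algebra `D`. -/
def IsInvolutionQ (D : Type*) [Ring D] [Algebra ℚ D] (st : D → D) : Prop :=
  (∀ x y : D, st (x + y) = st x + st y) ∧
  (∀ x y : D, st (x * y) = st y * st x) ∧
  (∀ x : D, st (st x) = x) ∧
  (∀ r : ℚ, st (algebraMap ℚ D r) = algebraMap ℚ D r)

/-- `ψ` is a `(D,*)`-Hermitian form on the right `D`-module `V`. -/
def IsHermitianForm (D : Type*) [Ring D] [Algebra ℚ D] (V : Type*) [AddCommGroup V]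
    [Module Dᵐᵒᵖ V] (st : D → D) (ψ : V → V → D) : Prop :=
  (∀ v v' w : V, ψ (v + v') w = ψ v w + ψ v' w) ∧
  (∀ v w w' : V, ψ v (w + w') = ψ v w + ψ v w') ∧
  (∀ (a : D) (v w : V), ψ (op a • v) w = st a * ψ v w) ∧
  (∀ (b : D) (v w : V), ψ v (op b • w) = ψ v w * b) ∧
  (∀ v w : V, ψ w v = st (ψ v w))

/-- `ψ` is a positive definite `(D,*)`-Hermitian form on the right `D`-module `V`. -/
def IsPosDefHermitianForm (D : Type*) [Ring D] [Algebra ℚ D] (V : Type*) [AddCommGroup V]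
    [Module Dᵐᵒᵖ V] (st : D → D) (ψ : V → V → D) : Prop :=
  IsHermitianForm D V st ψ ∧ ∀ v : V, v ≠ 0 → 0 < algTraceQ D (ψ v v)

open scoped TensorProduct

/-- The real base change of a positive definite symmetric bilinear form over `ℚ` is positive
definite. Positivity on rational vectors gives only semidefiniteness by density; definiteness comes
from diagonalizing the form over `ℚ`. -/
lemma baseChange_pos {W : Type*} [AddCommGroup W] [Module ℚ W] [FiniteDimensional ℚ W]
    (B : LinearMap.BilinForm ℚ W) (hs : ∀ x y, B x y = B y x) (hp : ∀ x, x ≠ 0 → 0 < B x x)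
    (x : TensorProduct ℚ ℝ W) (hx : x ≠ 0) : 0 < B.baseChange ℝ x x := by
  obtain ⟨v, hv⟩ := LinearMap.BilinForm.exists_orthogonal_basis (B := B) ⟨fun x y => hs x y⟩
  set b := v.baseChange ℝ with hb
  have hbb : ∀ i j, B.baseChange ℝ (b i) (b j) = if i = j then ((B (v i) (v i) : ℚ) : ℝ) else 0 := by
    intro i j
    rw [hb, Module.Basis.baseChange_apply, Module.Basis.baseChange_apply,
      LinearMap.BilinForm.baseChange_tmul]
    split_ifs with h
    · subst h; simp [Algebra.smul_def]
    · have : B (v i) (v j) = 0 := hv h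
      simp [this]
  have key : B.baseChange ℝ x x = ∑ i, (b.repr x i) ^ 2 * ((B (v i) (v i) : ℚ) : ℝ) := by
    conv_lhs => rw [← b.sum_repr x]
    simp only [map_sum, LinearMap.sum_apply, map_smul, LinearMap.smul_apply, hbb, smul_eq_mul]
    simp only [mul_ite, mul_zero, Finset.sum_ite_eq', Finset.mem_univ, if_true]
    exact Finset.sum_congr rfl fun i _ => by ring
  have hpos : ∀ i, 0 < ((B (v i) (v i) : ℚ) : ℝ) := fun i => by
    exact_mod_cast hp _ (v.ne_zero i)
  rw [key]
  refine Finset.sum_pos' (fun i _ => by have := hpos i; positivity) ?_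
  by_contra! h
  apply hx
  apply b.repr.map_eq_zero_iff.mp
  ext i
  have h1 := h i (Finset.mem_univ i)
  have h2 := hpos i
  by_contra h3
  have h4 : 0 < (b.repr x i) ^ 2 := by
    have : b.repr x i ≠ 0 := h3
    positivity
  nlinarith [mul_pos h4 h2]

/-- Over `ℝ`, a self-adjoint operator with positive eigenvalues is positive definite; this is the
spectral theorem for the inner product given by `B`. -/
lemma real_pos_of_eigenvalues {W : Type*} [AddCommGroup W] [Module ℝ W] [FiniteDimensional ℝ W]
    (B : LinearMap.BilinForm ℝ W) (hs : ∀ x y, B x y = B y x) (hp : ∀ x, x ≠ 0 → 0 < B x x)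
    (T : Module.End ℝ W) (hT : ∀ x y, B (T x) y = B x (T y))
    (he : ∀ μ : ℝ, T.HasEigenvalue μ → 0 < μ) (x : W) (hx : x ≠ 0) : 0 < B x (T x) := by
  let core : InnerProductSpace.Core ℝ W :=
    { inner := fun x y => B x y
      conj_inner_symm := fun x y => by simpa using hs y x
      re_inner_nonneg := fun x => by
        rcases eq_or_ne x 0 with rfl | h
        · simp
        · exact (hp x h).le
      add_left := fun x y z => by simp
      smul_left := fun x y r => by simp
      definite := fun x h => by
        by_contra h'
        exact (hp x h').ne' h }
  let _ : NormedAddCommGroup W := core.toNormedAddCommGroup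
  let _ : InnerProductSpace ℝ W := InnerProductSpace.ofCore core.toCore
  have hin : ∀ x y : W, inner ℝ x y = B x y := fun _ _ => rfl
  have hsym : T.IsSymmetric := fun x y => by rw [hin, hin]; exact hT x y
  let b := hsym.eigenvectorBasis (n := Module.finrank ℝ W) rfl
  have hev : ∀ i, 0 < hsym.eigenvalues rfl i := fun i => he _ (hsym.hasEigenvalue_eigenvalues rfl i)
  have key : B x (T x) = ∑ i, hsym.eigenvalues rfl i * (b.repr x i) ^ 2 := by
    rw [← hin, ← b.repr.inner_map_map, PiLp.inner_apply]
    refine Finset.sum_congr rfl fun i _ => ?_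
    have := hsym.eigenvectorBasis_apply_self_apply rfl x i
    change inner ℝ (b.repr x i) (b.repr (T x) i) = _
    have h2 : b.repr (T x) i = hsym.eigenvalues rfl i * b.repr x i := by simpa using this
    rw [h2]
    simp only [RCLike.inner_apply, conj_trivial]
    ring
  rw [key]
  refine Finset.sum_pos' (fun i _ => by have := hev i; positivity) ?_
  by_contra! h
  apply hx
  apply b.repr.map_eq_zero_iff.mp
  ext i
  have h1 := h i (Finset.mem_univ i)
  by_contra h3
  have h4 : 0 < (b.repr x i) ^ 2 := by
    have : b.repr x i ≠ 0 := h3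
    positivity
  nlinarith [mul_pos (hev i) h4]

/-- If `T` is self-adjoint and positive definite for a positive definite rational form, then its real
eigenvalues are positive. -/
lemma real_eigenvalue_pos_of_pos {W : Type*} [AddCommGroup W] [Module ℚ W] [FiniteDimensional ℚ W]
    (B : LinearMap.BilinForm ℚ W) (hs : ∀ x y, B x y = B y x) (hp : ∀ x, x ≠ 0 → 0 < B x x)
    (T : Module.End ℚ W) (hT : ∀ x y, B (T x) y = B x (T y))
    (hTp : ∀ x, x ≠ 0 → 0 < B x (T x)) (μ : ℝ)
    (hμ : Module.End.HasEigenvalue (T.baseChange ℝ) μ) : 0 < μ := by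
  obtain ⟨x, hx⟩ := hμ.exists_hasEigenvector
  let G : LinearMap.BilinForm ℚ W := B.compl₂ T
  have hG : ∀ x y, G x y = B x (T y) := fun _ _ => rfl
  have h1 := baseChange_pos B hs hp x hx.2
  have h2 := baseChange_pos G (fun x y => by rw [hG, hG, ← hT, hs]) hTp x hx.2
  have h3 : ∀ y z, G.baseChange ℝ y z = B.baseChange ℝ y (T.baseChange ℝ z) := by
    intro y z
    induction y with
    | zero => simp
    | add a b ha hb => simp [ha, hb]
    | tmul a m =>
      induction z with
      | zero => simp
      | add c d hc hd => simp [hc, hd]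
      | tmul c n => simp [LinearMap.BilinForm.baseChange_tmul, hG]
  rw [h3, hx.apply_eq_smul, map_smul, smul_eq_mul] at h2
  exact pos_of_mul_pos_left h2 h1.le

/-- If `T` is self-adjoint for a positive definite rational form and its real eigenvalues are
positive, then `T` is positive definite. -/
lemma pos_of_eigenvalue_pos {W : Type*} [AddCommGroup W] [Module ℚ W] [FiniteDimensional ℚ W]
    (B : LinearMap.BilinForm ℚ W) (hs : ∀ x y, B x y = B y x) (hp : ∀ x, x ≠ 0 → 0 < B x x)
    (T : Module.End ℚ W) (hT : ∀ x y, B (T x) y = B x (T y))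
    (he : ∀ μ : ℝ, Module.End.HasEigenvalue (T.baseChange ℝ) μ → 0 < μ)
    (x : W) (hx : x ≠ 0) : 0 < B x (T x) := by
  have hsr : ∀ x y, B.baseChange ℝ x y = B.baseChange ℝ y x := by
    intro y z
    induction y with
    | zero => simp
    | add a b ha hb => simp [ha, hb]
    | tmul a m =>
      induction z with
      | zero => simp
      | add c d hc hd => simp [hc, hd]
      | tmul c n => simp [LinearMap.BilinForm.baseChange_tmul, hs m n, mul_comm]
  have hTr : ∀ x y, B.baseChange ℝ (T.baseChange ℝ x) y = B.baseChange ℝ x (T.baseChange ℝ y) := by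
    intro y z
    induction y with
    | zero => simp
    | add a b ha hb => simp [ha, hb]
    | tmul a m =>
      induction z with
      | zero => simp
      | add c d hc hd => simp only [map_add, hc, hd]
      | tmul c n => simp [LinearMap.BilinForm.baseChange_tmul, hT]
  have hx' : (1 : ℝ) ⊗ₜ[ℚ] x ≠ 0 := by
    intro h
    apply hx
    have h0 : B.baseChange ℝ ((1 : ℝ) ⊗ₜ[ℚ] x) ((1 : ℝ) ⊗ₜ[ℚ] x) = 0 := by rw [h]; simp
    rw [LinearMap.BilinForm.baseChange_tmul] at h0
    by_contra h'
    have := hp x h'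
    simp [Algebra.smul_def] at h0
    exact this.ne' h0
  have := real_pos_of_eigenvalues (B.baseChange ℝ) hsr (baseChange_pos B hs hp) (T.baseChange ℝ)
    hTr he _ hx'
  rw [LinearMap.baseChange_tmul, LinearMap.BilinForm.baseChange_tmul] at this
  simpa [Algebra.smul_def] using this

/-- Positivity of `tr (S T)`, where `S` is the adjoint of `T`: expanding in an orthogonal
basis `vᵢ`, the trace is `∑ B (T vᵢ) (T vᵢ) / B vᵢ vᵢ`. -/
lemma trace_adjoint_mul_pos {W : Type*} [AddCommGroup W] [Module ℚ W] [FiniteDimensional ℚ W]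
    (B : LinearMap.BilinForm ℚ W) (hs : ∀ x y, B x y = B y x) (hp : ∀ x, x ≠ 0 → 0 < B x x)
    (T S : Module.End ℚ W) (hTS : ∀ x y, B (T x) y = B x (S y)) (hT : T ≠ 0) :
    0 < LinearMap.trace ℚ W (S * T) := by
  obtain ⟨v, hv⟩ := LinearMap.BilinForm.exists_orthogonal_basis (B := B) ⟨fun x y => hs x y⟩
  have hvp : ∀ i, 0 < B (v i) (v i) := fun i => hp _ (v.ne_zero i)
  have hco : ∀ i y, v.repr y i = B (v i) y / B (v i) (v i) := by
    intro i y
    rw [eq_div_iff (hvp i).ne']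
    conv_rhs => rw [← v.sum_repr y]
    rw [map_sum, Finset.sum_eq_single i]
    · simp
    · intro j _ hj
      have : B (v i) (v j) = 0 := hv hj.symm
      simp [this]
    · simp
  rw [LinearMap.trace_eq_matrix_trace ℚ v, Matrix.trace]
  have hd : ∀ i, (LinearMap.toMatrix v v (S * T)).diag i
      = B (T (v i)) (T (v i)) / B (v i) (v i) := by
    intro i
    rw [Matrix.diag_apply, LinearMap.toMatrix_apply, hco, Module.End.mul_apply, hTS]
  simp only [hd]
  have hnn : ∀ x, 0 ≤ B x x := fun x => by
    rcases eq_or_ne x 0 with rfl | h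
    · simp
    · exact (hp x h).le
  refine Finset.sum_pos' (fun i _ => div_nonneg (hnn _) (hvp i).le) ?_
  by_contra! h
  apply hT
  refine v.ext fun i => ?_
  by_contra h'
  exact absurd (h i (Finset.mem_univ i)) (not_le.mpr (div_pos (hp _ h') (hvp i)))

/-- The symmetrization `f v w + f w v` of a biadditive function, as a bilinear form over `ℚ`
(additive maps between rational vector spaces are `ℚ`-linear). -/
noncomputable def symBilin {W : Type*} [AddCommGroup W] [Module ℚ W] (f : W → W → ℚ)
    (h1 : ∀ v v' w, f (v + v') w = f v w + f v' w)
    (h2 : ∀ v w w', f v (w + w') = f v w + f v w') : LinearMap.BilinForm ℚ W :=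
  let g : W →+ W →+ ℚ := AddMonoidHom.mk' (fun v => AddMonoidHom.mk' (fun w => f v w + f w v)
    (fun w w' => by rw [h1, h2]; ring)) (fun v v' => by ext w; simp [h1, h2]; ring)
  LinearMap.mk₂ ℚ (fun v w => g v w) (fun v v' w => by simp) (fun c v w => by
      have := map_rat_smul (g.flip w) c v
      simpa using this)
    (fun v w w' => by simp) (fun c v w => map_rat_smul (g v) c w)

lemma algTraceQ_add (A : Type*) [Ring A] [Algebra ℚ A] (x y : A) :
    algTraceQ A (x + y) = algTraceQ A x + algTraceQ A y := by
  have h : LinearMap.mulLeft ℚ (x + y) = LinearMap.mulLeft ℚ x + LinearMap.mulLeft ℚ y := by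
    ext z; simp [add_mul]
  rw [algTraceQ, h, map_add]; rfl

/-- The action of `End_D(V)` on the underlying rational vector space of `V`. -/
def endToEndQ (R V : Type*) [Ring R] [Algebra ℚ R] [AddCommGroup V] [Module R V] [Module ℚ V]
    [SMulCommClass R ℚ V] [IsScalarTower ℚ R V] : Module.End R V →ₐ[ℚ] Module.End ℚ V where
  toFun a := a.restrictScalars ℚ
  map_one' := rfl
  map_mul' _ _ := rfl
  map_zero' := rfl
  map_add' _ _ := rfl
  commutes' _ := rfl

/-- A real eigenvalue of the action of `q` in a representation `φ` of a finite-dimensional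
`ℚ`-algebra `A` is an eigenvalue of left multiplication by `q`, since `q` is killed by the
characteristic polynomial of its left multiplication. -/
lemma hasEigenvalue_mulLeft {A W : Type*} [Ring A] [Algebra ℚ A] [FiniteDimensional ℚ A]
    [AddCommGroup W] [Module ℚ W] (φ : A →ₐ[ℚ] Module.End ℚ W) (q : A) (μ : ℝ)
    (hμ : Module.End.HasEigenvalue ((φ q).baseChange ℝ) μ) :
    Module.End.HasEigenvalue ((LinearMap.mulLeft ℚ q).baseChange ℝ) μ := by
  obtain ⟨x, hx⟩ := hμ.exists_hasEigenvector
  rw [Module.End.hasEigenvalue_iff_isRoot_charpoly, LinearMap.charpoly_baseChange]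
  have h0 : Polynomial.aeval q (LinearMap.mulLeft ℚ q).charpoly = 0 :=
    Algebra.aeval_self_charpoly_lmul (R := ℚ) q
  have h1 : Polynomial.aeval ((φ q).baseChange ℝ) (LinearMap.mulLeft ℚ q).charpoly = 0 := by
    have := congrArg (fun a => Module.End.baseChangeHom ℚ ℝ W (φ a)) h0
    simp only [← Polynomial.aeval_algHom_apply, map_zero] at this
    exact this
  rw [← Polynomial.aeval_map_algebraMap ℝ] at h1
  have h2 := Module.End.aeval_apply_of_hasEigenvector
    (p := (LinearMap.mulLeft ℚ q).charpoly.map (algebraMap ℚ ℝ)) hx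
  rw [h1, LinearMap.zero_apply] at h2
  exact (smul_eq_zero.mp h2.symm).resolve_right hx.2

/-- **Twisting a positive definite Hermitian form by a symmetric positive element of the
endomorphism algebra yields a positive definite Hermitian form.** -/
theorem positive_definite_form_multiply
    (D : Type*) [Ring D] [Algebra ℚ D] [FiniteDimensional ℚ D] [IsSemisimpleRing D]
    (st : D → D) (hst : IsInvolutionQ D st)
    (V : Type*) [AddCommGroup V] [Module Dᵐᵒᵖ V] [Nontrivial V]
    [Module ℚ V] [FiniteDimensional ℚ V] [Module.Finite Dᵐᵒᵖ V]
    [SMulCommClass Dᵐᵒᵖ ℚ V] [IsScalarTower ℚ Dᵐᵒᵖ V]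
    (ψ : V → V → D) (hψ : IsPosDefHermitianForm D V st ψ)
    (dag : Module.End Dᵐᵒᵖ V → Module.End Dᵐᵒᵖ V)
    (hdag : IsInvolutionQ (Module.End Dᵐᵒᵖ V) dag)
    (hadj : ∀ (a : Module.End Dᵐᵒᵖ V) (v w : V), ψ (a v) w = ψ v (dag a w))
    (q : Module.End Dᵐᵒᵖ V)
    (hqsymm : dag q = q)
    (hqpos : ∀ a : Module.End Dᵐᵒᵖ V, a ≠ 0 →
      0 < algTraceQ (Module.End Dᵐᵒᵖ V) (dag a * q * a)) :
    IsPosDefHermitianForm D V st (fun v w => ψ v (q w)) := by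
  classical
  obtain ⟨⟨hadd1, hadd2, hsm1, hsm2, hsym⟩, hpd⟩ := hψ
  obtain ⟨dadd, dmul, dinv, -⟩ := hdag
  refine ⟨⟨fun v v' w => hadd1 _ _ _, fun v w w' => by simp only [map_add, hadd2],
    fun a v w => hsm1 _ _ _, fun b v w => by simp only [map_smul, hsm2], fun v w => ?_⟩, ?_⟩
  · rw [← hsym, hadj, hqsymm]
  let φ := endToEndQ Dᵐᵒᵖ V
  have hφ : ∀ a v, φ a v = a v := fun _ _ => rfl
  have hφinj : Function.Injective φ := fun a b h => LinearMap.ext fun v => LinearMap.congr_fun h v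
  have : FiniteDimensional ℚ (Module.End Dᵐᵒᵖ V) :=
    FiniteDimensional.of_injective φ.toLinearMap hφinj
  let B : LinearMap.BilinForm ℚ V := symBilin (fun v w => algTraceQ D (ψ v w))
    (fun v v' w => by rw [hadd1, algTraceQ_add]) (fun v w w' => by rw [hadd2, algTraceQ_add])
  have hB : ∀ v w, B v w = algTraceQ D (ψ v w) + algTraceQ D (ψ w v) := fun _ _ => rfl
  have hBs : ∀ v w, B v w = B w v := fun v w => by rw [hB, hB, add_comm]
  have hBp : ∀ v, v ≠ 0 → 0 < B v v := fun v hv => by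
    rw [hB]; exact add_pos (hpd v hv) (hpd v hv)
  have hBn : ∀ v, 0 ≤ B v v := fun v => by
    rcases eq_or_ne v 0 with rfl | h
    · simp
    · exact (hBp v h).le
  have hBadj : ∀ (a : Module.End Dᵐᵒᵖ V) v w, B (a v) w = B v (dag a w) := fun a v w => by
    rw [hB, hB, hadj, hadj (dag a), dinv]
  -- The auxiliary form `F₀(a, b) = ∑ B(a vᵢ, b vᵢ)`; twice it, because `symBilin` symmetrizes.
  let b := Module.finBasis ℚ V
  let F0 : LinearMap.BilinForm ℚ (Module.End Dᵐᵒᵖ V) :=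
    symBilin (fun x y => ∑ i, B (x (b i)) (y (b i)))
      (fun x x' y => by simp [Finset.sum_add_distrib])
      (fun x y y' => by simp [Finset.sum_add_distrib])
  have hF0 : ∀ x y, F0 x y = ∑ i, B (x (b i)) (y (b i)) + ∑ i, B (y (b i)) (x (b i)) :=
    fun _ _ => rfl
  have hF0s : ∀ x y, F0 x y = F0 y x := fun x y => by rw [hF0, hF0, add_comm]
  have hF0p : ∀ x, x ≠ 0 → 0 < F0 x x := fun x hx => by
    have : 0 < ∑ i, B (x (b i)) (x (b i)) := by
      refine Finset.sum_pos' (fun i _ => hBn _) ?_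
      by_contra! h
      apply hx
      apply hφinj
      refine b.ext fun i => ?_
      by_contra h'
      exact absurd (h i (Finset.mem_univ i)) (not_le.mpr (hBp _ h'))
    rw [hF0]; exact add_pos this this
  have htr : ∀ a : Module.End Dᵐᵒᵖ V, a ≠ 0 → 0 < algTraceQ (Module.End Dᵐᵒᵖ V) (dag a * a) := by
    intro a ha
    have := trace_adjoint_mul_pos F0 hF0s hF0p (LinearMap.mulLeft ℚ a) (LinearMap.mulLeft ℚ (dag a))
      (fun x y => by
        rw [hF0, hF0]
        congr 1 <;> refine Finset.sum_congr rfl fun i _ => ?_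
        · exact hBadj a _ _
        · rw [hBs]
          exact (hBadj a _ _).trans (hBs _ _))
      (fun h => ha (by simpa using LinearMap.congr_fun h 1))
    rwa [Module.End.mul_eq_comp, ← LinearMap.mulLeft_mul] at this
  let F : LinearMap.BilinForm ℚ (Module.End Dᵐᵒᵖ V) :=
    symBilin (fun x y => algTraceQ (Module.End Dᵐᵒᵖ V) (dag x * y))
      (fun x x' y => by rw [dadd, add_mul, algTraceQ_add])
      (fun x y y' => by rw [mul_add, algTraceQ_add])
  have hF : ∀ x y, F x y = algTraceQ (Module.End Dᵐᵒᵖ V) (dag x * y)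
      + algTraceQ (Module.End Dᵐᵒᵖ V) (dag y * x) := fun _ _ => rfl
  have hev : ∀ μ : ℝ, Module.End.HasEigenvalue
      ((LinearMap.mulLeft ℚ q : Module.End ℚ (Module.End Dᵐᵒᵖ V)).baseChange ℝ) μ → 0 < μ := by
    refine real_eigenvalue_pos_of_pos F (fun x y => by rw [hF, hF, add_comm])
      (fun x hx => by rw [hF]; exact add_pos (htr x hx) (htr x hx)) _ (fun x y => ?_)
      (fun x hx => ?_)
    · simp only [hF, LinearMap.mulLeft_apply, dmul, hqsymm, mul_assoc]
    · simp only [hF, LinearMap.mulLeft_apply, dmul, hqsymm, ← mul_assoc]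
      exact add_pos (hqpos x hx) (hqpos x hx)
  intro v hv
  have h := pos_of_eigenvalue_pos B hBs hBp (φ q)
    (fun x y => by rw [hφ, hφ, hBadj, hqsymm])
    (fun μ hμ => hev μ (hasEigenvalue_mulLeft φ q μ hμ)) v hv
  rw [hφ, hB, hadj q v v, hqsymm] at h
  linarith
end

section
/- Let D be a division algebra over ℚ, V a nonzero finite-dimensional right D-module, E = End_D(V) the ring of right-D-module endomorphisms of V, and † a positive involution of E. Then there exist (1) a positive involution * of D, and (2) a positive definite (D,*)-Hermitian form ψ : V × V → D, such that † is the adjoint involution associated with ψ, i.e. ψ(a(v), w) = ψ(v, a†(w)) for all v, w ∈ V and a ∈ E. -/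
/-! The form is read off from a self-adjoint idempotent of rank one.

For a right-linear functional `φ : V → D` and `w : V` let `T φ w` be the endomorphism
`x ↦ w · φ x`. Start from any rank-one `a = T φ v₀`. Positivity gives `h = a† a ≠ 0`, and `h` is
self-adjoint of the form `T φ u`; positivity again gives `h² = h† h ≠ 0`, that is, `φ u ≠ 0`. With
`v = u · (φ u)⁻¹` the endomorphism `e = T φ v` is the idempotent with the same image and kernel as
`h`; as it lies both in `h E` and in `E h`, it satisfies `e† = e`
(`exists_selfAdjoint_rank_one_idempotent`).

Since `T φ w = T φ w ∘ e`, the image of `(T φ w)†` lies in `v · D`, and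
`ψ w w' = φ ((T φ w)† w')` satisfies `(T φ w)† ∘ T φ w' = T φ (v · ψ w w')`. The involution of `D` is
`d* = ψ (v · d) v`, which amounts to restricting `†` to the corner `e E e ≅ D`. All algebraic
identities follow from the formulas for products of the `T φ w`.

For positivity, left multiplication by `T φ (v · d)` on `E` factors through the left `D`-space
`V →ₗ[Dᵐᵒᵖ] D`, on which the composite in the other order is multiplication by `d`. So its trace is
a positive multiple of the trace of `d` on `D` (`algTraceQ_rankOne`), and the positivity of
`†` at `T φ w` becomes the positivity of `ψ w w`.
-/


open MulOpposite

/-- `st` is a positive involution of the `ℚ`-algebra `D`. -/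
def IsPositiveInvolutionQ (D : Type*) [Ring D] [Algebra ℚ D] (st : D → D) : Prop :=
  IsInvolutionQ D st ∧ ∀ d : D, d ≠ 0 → 0 < algTraceQ D (st d * d)

namespace PosInvolution

section Trace

/-- On a finite-dimensional left vector space `M` over `D`, the trace of multiplication by `d` is
`dim_D M` times its trace on `D`. -/
lemma trace_smul (D M : Type*) [DivisionRing D] [CharZero D] [FiniteDimensional ℚ D]
    [AddCommGroup M] [Module D M] [Module ℚ M] [IsScalarTower ℚ D M] [FiniteDimensional ℚ M]
    (d : D) (f : M →ₗ[ℚ] M) (hf : ∀ m, f m = d • m) :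
    LinearMap.trace ℚ M f = (Module.finrank D M : ℚ) * algTraceQ D d := by
  have : Module.Finite D M := Module.Finite.of_restrictScalars_finite ℚ D M
  let b := Module.finBasis D M
  let q : M ≃ₗ[ℚ] (Fin (Module.finrank D M) → D) := b.equivFun.restrictScalars ℚ
  rw [← LinearMap.trace_conj' f q]
  have hpi : q.conj f = LinearMap.pi fun i =>
      LinearMap.mulLeft ℚ d ∘ₗ LinearMap.proj i := by
    apply LinearMap.ext
    intro x
    ext j
    change b.equivFun (f (b.equivFun.symm x)) j = d * x j
    rw [hf, map_smul, LinearEquiv.apply_symm_apply, Pi.smul_apply, smul_eq_mul]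
  rw [hpi]
  let c := Module.finBasis ℚ D
  rw [LinearMap.trace_eq_matrix_trace ℚ (Pi.basis fun _ => c), algTraceQ,
    LinearMap.trace_eq_matrix_trace ℚ c]
  simp [Matrix.trace, Fintype.sum_sigma, LinearMap.toMatrix_apply, Pi.basis_repr,
    Algebra.leftMulMatrix_eq_repr_mul]

end Trace

section RankOne

variable {D V : Type*} [DivisionRing D] [AddCommGroup V] [Module Dᵐᵒᵖ V]

/-- The endomorphism `x ↦ w · φ x` of the right `D`-module `V`; right scalar multiplication by `d`
is written `op d • _`. -/
def T (φ : V →ₗ[Dᵐᵒᵖ] D) (w : V) : Module.End Dᵐᵒᵖ V where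
  toFun x := op (φ x) • w
  map_add' x y := by simp [add_smul]
  map_smul' d x := by
    rw [map_smul, RingHom.id_apply, smul_smul]
    congr 1

lemma T_apply (φ : V →ₗ[Dᵐᵒᵖ] D) (w x : V) : T φ w x = op (φ x) • w := rfl

lemma map_op_smul (φ : V →ₗ[Dᵐᵒᵖ] D) (d : D) (x : V) : φ (op d • x) = φ x * d := by
  rw [map_smul]; rfl

lemma mul_T (φ : V →ₗ[Dᵐᵒᵖ] D) (a : Module.End Dᵐᵒᵖ V) (w : V) : a * T φ w = T φ (a w) := by
  ext x; simp [T_apply]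

lemma T_add (φ : V →ₗ[Dᵐᵒᵖ] D) (w w' : V) : T φ (w + w') = T φ w + T φ w' := by
  ext x; simp [T_apply]

variable (D V) in
lemma exists_functional [Nontrivial V] : ∃ (φ : V →ₗ[Dᵐᵒᵖ] D) (v : V), φ v = 1 := by
  let b := Module.Basis.ofVectorSpace Dᵐᵒᵖ V
  obtain ⟨i⟩ := b.index_nonempty
  refine ⟨{ toFun := fun x => unop (b.coord i x)
            map_add' := by simp
            map_smul' := by simp }, b i, by simp⟩

variable [CharZero D] [Module ℚ V] [SMulCommClass Dᵐᵒᵖ ℚ V] [IsScalarTower ℚ Dᵐᵒᵖ V]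

/-- If `φ v = 1`, then `T φ (v · d)` acts on `E = End_D(V)` by left multiplication with trace a
positive multiple of the trace of `d`. -/
lemma algTraceQ_rankOne [FiniteDimensional ℚ D] [FiniteDimensional ℚ V]
    (φ : V →ₗ[Dᵐᵒᵖ] D) (v : V) (hv : φ v = 1) :
    ∃ n : ℕ, 0 < n ∧ ∀ d : D,
      algTraceQ (Module.End Dᵐᵒᵖ V) (T φ (op d • v)) = n * algTraceQ D d := by
  have : FiniteDimensional ℚ (V →ₗ[Dᵐᵒᵖ] D) :=
    FiniteDimensional.of_injective (V₂ := V →ₗ[ℚ] D)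
      { toFun := fun f => f.restrictScalars ℚ
        map_add' := fun _ _ => rfl
        map_smul' := fun _ _ => rfl }
      (LinearMap.restrictScalars_injective ℚ)
  have : FiniteDimensional ℚ (Module.End Dᵐᵒᵖ V) :=
    FiniteDimensional.of_injective (V₂ := V →ₗ[ℚ] V)
      { toFun := fun f => f.restrictScalars ℚ
        map_add' := fun _ _ => rfl
        map_smul' := fun _ _ => rfl }
      (LinearMap.restrictScalars_injective ℚ)
  have : Module.Finite D (V →ₗ[Dᵐᵒᵖ] D) := Module.Finite.of_restrictScalars_finite ℚ D _
  have : Nontrivial (V →ₗ[Dᵐᵒᵖ] D) := ⟨φ, 0, fun h => by simp [h] at hv⟩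
  refine ⟨Module.finrank D (V →ₗ[Dᵐᵒᵖ] D), Module.finrank_pos, fun d => ?_⟩
  let π : Module.End Dᵐᵒᵖ V →ₗ[ℚ] (V →ₗ[Dᵐᵒᵖ] D) :=
    { toFun := fun x => φ ∘ₗ x
      map_add' := fun x y => by ext; simp
      map_smul' := fun r x => by ext z; exact map_rat_smul φ r (x z) }
  let ι : (V →ₗ[Dᵐᵒᵖ] D) →ₗ[ℚ] Module.End Dᵐᵒᵖ V :=
    { toFun := fun f => T f (op d • v)
      map_add' := fun f g => by ext; simp [T_apply, add_smul]
      map_smul' := fun r f => by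
        ext z
        simp only [T_apply, LinearMap.smul_apply, RingHom.id_apply, op_smul, smul_assoc] }
  have h1 : LinearMap.mulLeft ℚ (T φ (op d • v)) = ι ∘ₗ π := by
    apply LinearMap.ext
    intro x
    ext z
    rfl
  rw [algTraceQ, h1, LinearMap.trace_comp_comm']
  refine trace_smul D _ d _ fun f => ?_
  ext z
  simp [π, ι, T_apply, hv]

/-- A positive involution of `End_D(V)` fixes some idempotent of rank one. -/
lemma exists_selfAdjoint_rank_one_idempotent [Nontrivial V]
    (dag : Module.End Dᵐᵒᵖ V → Module.End Dᵐᵒᵖ V)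
    (hdag : IsInvolutionQ (Module.End Dᵐᵒᵖ V) dag)
    (hdagpos : ∀ a : Module.End Dᵐᵒᵖ V, a ≠ 0 →
      0 < algTraceQ (Module.End Dᵐᵒᵖ V) (dag a * a)) :
    ∃ (φ : V →ₗ[Dᵐᵒᵖ] D) (v : V), φ v = 1 ∧ dag (T φ v) = T φ v := by
  obtain ⟨-, hmul, hinv, -⟩ := hdag
  have hne : ∀ a, a ≠ 0 → dag a * a ≠ 0 := fun a ha h => by
    have := hdagpos a ha
    simp [h, algTraceQ] at this
  obtain ⟨φ, v₀, hv₀⟩ := exists_functional D V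
  have hT : ∀ w, T φ w v₀ = w := fun w => by simp [T_apply, hv₀]
  have ha : T φ v₀ ≠ 0 := fun h => by
    have h2 : v₀ = 0 := by rw [← hT v₀, h]; rfl
    simp [h2] at hv₀
  obtain ⟨u, hu⟩ : ∃ u, dag (T φ v₀) * T φ v₀ = T φ u := ⟨_, mul_T _ _ _⟩
  have hsa : dag (T φ u) = T φ u := by rw [← hu, hmul, hinv]
  have hh : T φ u ≠ 0 := hu ▸ hne _ ha
  have hc : φ u ≠ 0 := fun h => by
    apply hne _ hh
    rw [hsa, mul_T, T_apply, h]
    ext; simp [T_apply]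
  refine ⟨φ, op (φ u)⁻¹ • u, by simp [hc], ?_⟩
  set e := T φ (op (φ u)⁻¹ • u) with he
  have heh : e * T φ u = T φ u := by
    rw [mul_T, he, T_apply, smul_smul, ← op_mul, inv_mul_cancel₀ hc, op_one, one_smul]
  obtain ⟨S, hS⟩ : ∃ S, e = S * T φ u := by
    refine ⟨T φ (op (φ u)⁻¹ • op (φ u)⁻¹ • u), ?_⟩
    rw [mul_T, T_apply, he, smul_smul (op (φ u)), ← op_mul, inv_mul_cancel₀ hc, op_one, one_smul]
  have hed : e * dag e = dag e := by
    have : dag e = T φ u * dag S := by rw [hS, hmul, hsa]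
    rw [this, ← mul_assoc, heh]
  have := congrArg dag hed
  rw [hmul, hinv, hed] at this
  exact this

end RankOne

end PosInvolution

open PosInvolution

/-- **Every positive involution of `End_D(V)`, `D` a division algebra over `ℚ`, is the
adjoint involution of a positive definite Hermitian form with respect to some positive
involution of `D`.** -/
theorem positive_involution_is_adjoint_of_pos_def_hermitian
    (D : Type*) [DivisionRing D] [CharZero D] [FiniteDimensional ℚ D]
    (V : Type*) [AddCommGroup V] [Module Dᵐᵒᵖ V] [Nontrivial V]
    [Module ℚ V] [FiniteDimensional ℚ V] [Module.Finite Dᵐᵒᵖ V]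
    [SMulCommClass Dᵐᵒᵖ ℚ V] [IsScalarTower ℚ Dᵐᵒᵖ V]
    (dag : Module.End Dᵐᵒᵖ V → Module.End Dᵐᵒᵖ V)
    (hdag : IsInvolutionQ (Module.End Dᵐᵒᵖ V) dag)
    (hdagpos : ∀ a : Module.End Dᵐᵒᵖ V, a ≠ 0 →
      0 < algTraceQ (Module.End Dᵐᵒᵖ V) (dag a * a)) :
    ∃ (st : D → D) (ψ : V → V → D),
      IsPositiveInvolutionQ D st ∧
      IsPosDefHermitianForm D V st ψ ∧
      ∀ (a : Module.End Dᵐᵒᵖ V) (v w : V), ψ (a v) w = ψ v (dag a w) := by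
  obtain ⟨φ, v, hv, he⟩ := exists_selfAdjoint_rank_one_idempotent dag hdag hdagpos
  obtain ⟨hadd, hmul, hinv, -⟩ := hdag
  obtain ⟨n, hn, htr⟩ := algTraceQ_rankOne φ v hv
  let ψ : V → V → D := fun w w' => φ (dag (T φ w) w')
  let st : D → D := fun d => ψ (op d • v) v
  have hTv : ∀ w, T φ w v = w := fun w => by simp [T_apply, hv]
  have hTe : ∀ w, T φ w * T φ v = T φ w := fun w => by rw [mul_T, hTv]
  -- `(T φ w)† = e ∘ (T φ w)†`, so its image lies in `v · D`.
  have himg : ∀ w w', dag (T φ w) w' = op (ψ w w') • v := fun w w' => by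
    conv_lhs => rw [← hTe w, hmul, he]
    rfl
  have hprod : ∀ w w', dag (T φ w) * T φ w' = T φ (op (ψ w w') • v) := fun w w' => by
    rw [mul_T, himg]
  have hadj : ∀ (a : Module.End Dᵐᵒᵖ V) (w w' : V), ψ (a w) w' = ψ w (dag a w') :=
    fun a w w' => by
      simp only [ψ]
      rw [← mul_T, hmul]
      rfl
  have hr : ∀ (b : D) (w w' : V), ψ w (op b • w') = ψ w w' * b := fun b w w' => by
    simp only [ψ, map_smul]
    rfl
  have hl1 : ∀ w w' x, ψ (w + w') x = ψ w x + ψ w' x := fun w w' x => by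
    simp [ψ, T_add, hadd]
  have hl : ∀ (a : D) (w w' : V), ψ (op a • w) w' = st a * ψ w w' := fun a w w' => by
    have h1 : T φ (op a • w) = T φ w * T φ (op a • v) := by
      rw [mul_T, map_smul, hTv]
    have h2 : ψ (op a • w) w' = ψ (op a • v) (dag (T φ w) w') := by
      simp only [ψ]
      rw [h1, hmul]
      rfl
    rw [h2, himg, hr]
  have hherm : ∀ w w', ψ w' w = st (ψ w w') := fun w w' => by
    have h := congrArg dag (hprod w w')
    rw [hmul, hinv] at h
    simp only [st]
    change _ = φ (dag (T φ (op (ψ w w') • v)) v)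
    rw [← h, Module.End.mul_apply, hTv]
  have hvv : ψ v v = 1 := by
    simp only [ψ]
    rw [he, hTv, hv]
  have hst_one : st 1 = 1 := by simp [st, hvv]
  have hst_add : ∀ x y, st (x + y) = st x + st y := fun x y => by
    simp only [st, op_add, add_smul, hl1]
  have hpos : ∀ w, w ≠ 0 → 0 < algTraceQ D (ψ w w) := fun w hw => by
    have h := hdagpos (T φ w) fun h0 => hw (by rw [← hTv w, h0]; rfl)
    rw [hprod, htr] at h
    exact pos_of_mul_pos_right h (Nat.cast_nonneg n)
  have hv0 : v ≠ 0 := fun h => by simp [h] at hv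
  refine ⟨st, ψ, ⟨⟨hst_add, ?_, ?_, ?_⟩, ?_⟩, ⟨⟨hl1, ?_, hl, hr, hherm⟩, hpos⟩, hadj⟩
  · intro x y
    have h := hl y (op x • v) v
    rwa [smul_smul, ← op_mul] at h
  · intro x
    have h := hherm (op x • v) v
    rw [hr, hvv, one_mul] at h
    exact h.symm
  · intro r
    have h := map_rat_smul (AddMonoidHom.mk' st hst_add) r (1 : D)
    rw [Algebra.algebraMap_eq_smul_one]
    simpa [hst_one] using h
  · intro d hd
    have h := hpos (op d • v) (smul_ne_zero (by simpa using hd) hv0)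
    rwa [hr, hl, hvv, mul_one] at h
  · intro w x y
    simp [ψ]
end

section
/- Let D be a division algebra over ℚ with an involution !, V a nonzero finite-dimensional right D-module, and φ : V × V → D a non-singular form which is either (D,!)-Hermitian or (D,!)-skew-Hermitian. Suppose the adjoint involution † of End_D(V) with respect to φ (characterized by φ(a(v), w) = φ(v, a†(w)) for all v,w ∈ V, a ∈ End_D(V)) is a positive involution. Then there exists v₀ ∈ V with φ(v₀, v₀) ≠ 0. -/
/-!
If `v` is a nonzero isotropic vector, the rank-one endomorphism `a x = v · φ(v, x)` satisfies
`φ(x, (a† a) y) = φ(a x, a y) = φ(v, x)! · φ(v, v) · φ(v, y) = 0` for all `x, y`, so `a† a = 0` by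
non-singularity, while `a ≠ 0`. This contradicts the positivity of `†`, so every nonzero vector
of `V` is non-isotropic.
-/

open MulOpposite

/-- `φ` is a `(D,!)-sesquilinear` form on the right `D`-module `V` (the common part of
the definitions of Hermitian and skew-Hermitian forms). -/
def IsSesquilinearForm (D : Type*) [Ring D] [Algebra ℚ D] (V : Type*) [AddCommGroup V]
    [Module Dᵐᵒᵖ V] (excl : D → D) (φ : V → V → D) : Prop :=
  (∀ v v' w : V, φ (v + v') w = φ v w + φ v' w) ∧
  (∀ v w w' : V, φ v (w + w') = φ v w + φ v w') ∧
  (∀ (a : D) (v w : V), φ (op a • v) w = excl a * φ v w) ∧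
  (∀ (b : D) (v w : V), φ v (op b • w) = φ v w * b)

/-- **A non-singular Hermitian or skew-Hermitian form whose adjoint involution is
positive does not vanish identically on the diagonal.** -/
theorem exists_nonisotropic_vector
    (D : Type*) [DivisionRing D] [CharZero D] [FiniteDimensional ℚ D]
    (excl : D → D) (hexcl : IsInvolutionQ D excl)
    (V : Type*) [AddCommGroup V] [Module Dᵐᵒᵖ V] [Nontrivial V]
    [Module ℚ V] [FiniteDimensional ℚ V] [Module.Finite Dᵐᵒᵖ V]
    [SMulCommClass Dᵐᵒᵖ ℚ V] [IsScalarTower ℚ Dᵐᵒᵖ V]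
    (φ : V → V → D)
    (hφ : IsSesquilinearForm D V excl φ)
    (hsym : (∀ v w : V, φ w v = excl (φ v w)) ∨ (∀ v w : V, φ w v = - excl (φ v w)))
    (hns : ∀ v : V, (∀ w : V, φ v w = 0) → v = 0)
    (dag : Module.End Dᵐᵒᵖ V → Module.End Dᵐᵒᵖ V)
    (hadj : ∀ (a : Module.End Dᵐᵒᵖ V) (v w : V), φ (a v) w = φ v (dag a w))
    (hdagpos : ∀ a : Module.End Dᵐᵒᵖ V, a ≠ 0 →
      0 < algTraceQ (Module.End Dᵐᵒᵖ V) (dag a * a)) :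
    ∃ v₀ : V, φ v₀ v₀ ≠ 0 := by
  obtain ⟨_, hadd₂, hsmul₁, hsmul₂⟩ := hφ
  obtain ⟨v, hv⟩ := exists_ne (0 : V)
  refine ⟨v, fun hvv => ?_⟩
  let a : Module.End Dᵐᵒᵖ V :=
    { toFun := fun x => op (φ v x) • v
      map_add' := fun x y => by rw [hadd₂, op_add, add_smul]
      map_smul' := fun r x => by
        obtain ⟨b, rfl⟩ := op_surjective r
        rw [hsmul₂, op_mul, mul_smul, RingHom.id_apply] }
  have ha : ∀ x, a x = op (φ v x) • v := fun _ => rfl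
  have ha0 : a ≠ 0 := by
    intro h
    refine hv (hns v fun w => ?_)
    have hw : op (φ v w) • v = 0 := by rw [← ha, h, LinearMap.zero_apply]
    simpa [hv] using hw
  have hexcl0 : excl 0 = 0 := by simpa using hexcl.1 0 0
  -- `hns` concerns the left argument only; the symmetry of `φ` transfers it to the right one.
  have hnsr : ∀ z : V, (∀ x : V, φ x z = 0) → z = 0 := by
    intro z hz
    refine hns z fun x => ?_
    rcases hsym with h | h
    · rw [h x z, hz x, hexcl0]
    · rw [h x z, hz x, hexcl0, neg_zero]
  have hzero : dag a * a = 0 := by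
    refine LinearMap.ext fun y => hnsr _ fun x => ?_
    rw [Module.End.mul_apply, ← hadj, ha, ha, hsmul₁, hsmul₂, hvv, zero_mul, mul_zero]
  have hpos := hdagpos a ha0
  rw [hzero] at hpos
  simp [algTraceQ] at hpos
end

section
/- Let D be a division algebra over ℚ with an involution !, V a nonzero finite-dimensional right D-module, and φ : V × V → D a non-singular (D,!)-Hermitian or (D,!)-skew-Hermitian form whose adjoint involution † of End_D(V) (characterized by φ(a(v), w) = φ(v, a†(w))) is positive. Let v₀ ∈ V with s := φ(v₀, v₀) ≠ 0. Define a map * : D → D by d* = s⁻¹·d!·s, and a map ψ : V × V → D by ψ(v, w) = s⁻¹·φ(v, w). Then * is a positive involution of D and ψ is a positive definite (D,*)-Hermitian form on V. -/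
/-!
Let `s = φ v₀ v₀`, and let `ε = ±1` be the sign for which `φ w v = ε (φ v w)!`. For `x y : V`
consider the rank-one operator `E : u ↦ x · φ(y, u)`. Non-singularity of `φ` gives
`(E† E) u = y · (ε φ(x, x) φ(y, u))`, again of rank one.

Left multiplication on `End_D(V)` by a rank-one operator `u ↦ z · f(u)` factors through the dual
`Hom_D(V, D)`, and composing the two factors in the other order gives left multiplication by
`f(z)` on that dual. Since the dual is a left `D`-vector space, of dimension `n` say, the trace is
`n · Tr(f(z) ; D)` (`exists_algTraceQ_end_rankOne`). Positivity of `†` therefore yields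
`Tr(ε φ(x, x) φ(y, y) ; D) > 0` for all non-zero `x`, `y` (`algTraceQ_diag_mul_diag_pos`).

Taking `x = v₀ s⁻¹`, for which `ε φ(x, x) = s⁻¹`, gives positive definiteness of `s⁻¹ φ`.
Positivity of `*` is the special case `y = v₀ d`, as `s⁻¹ φ(v₀ d, v₀ d) = d* d`.
-/

open MulOpposite

/-- A finite-dimensional left `D`-vector space `W` is a sum of `n` copies of `D`, so the trace of
a scalar multiplication on `W` is `n` times the trace of the corresponding left multiplication. -/
theorem exists_trace_smul_eq (D : Type*) [DivisionRing D] [CharZero D] [FiniteDimensional ℚ D]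
    (W : Type*) [AddCommGroup W] [Module D W] [Module ℚ W] [IsScalarTower ℚ D W]
    [Module.Finite D W] :
    ∃ n : ℕ, ∀ (d : D) (g : W →ₗ[ℚ] W), (∀ w, g w = d • w) →
      LinearMap.trace ℚ W g = n * algTraceQ D d := by
  classical
  let c := Module.finBasis D W
  let b := Module.finBasis ℚ D
  refine ⟨Module.finrank D W, fun d g hg => ?_⟩
  rw [algTraceQ, LinearMap.trace_eq_matrix_trace ℚ (b.smulTower c),
    LinearMap.trace_eq_matrix_trace ℚ b]
  simp [Matrix.trace, LinearMap.toMatrix_apply, Module.Basis.smulTower_repr, hg,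
    Algebra.leftMulMatrix_eq_repr_mul, smul_smul,
    Fintype.sum_prod_type, Finset.mul_sum]

/-- The trace of left multiplication by the rank-one endomorphism `u ↦ z · f(u)` of `V` is
`n · Tr(f(z) ; D)`, where `n` is the dimension of the dual of `V`. -/
theorem exists_algTraceQ_end_rankOne
    (D : Type*) [DivisionRing D] [CharZero D] [FiniteDimensional ℚ D]
    (V : Type*) [AddCommGroup V] [Module Dᵐᵒᵖ V]
    [Module ℚ V] [FiniteDimensional ℚ V]
    [SMulCommClass Dᵐᵒᵖ ℚ V] [IsScalarTower ℚ Dᵐᵒᵖ V] :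
    ∃ n : ℕ, ∀ (T : Module.End Dᵐᵒᵖ V) (f : V →ₗ[Dᵐᵒᵖ] D) (z : V),
      (∀ u, T u = op (f u) • z) →
      algTraceQ (Module.End Dᵐᵒᵖ V) T = n * algTraceQ D (f z) := by
  -- Both `Hom` spaces embed into spaces of `ℚ`-linear maps.
  have hfinDual : Module.Finite ℚ (V →ₗ[Dᵐᵒᵖ] D) :=
    Module.Finite.of_injective (LinearMap.restrictScalarsₗ ℚ Dᵐᵒᵖ V D ℚ)
      (LinearMap.restrictScalars_injective ℚ)
  have hfinEnd : Module.Finite ℚ (Module.End Dᵐᵒᵖ V) :=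
    Module.Finite.of_injective (LinearMap.restrictScalarsₗ ℚ Dᵐᵒᵖ V V ℚ)
      (LinearMap.restrictScalars_injective ℚ)
  have hfinD : Module.Finite D (V →ₗ[Dᵐᵒᵖ] D) := Module.Finite.of_restrictScalars_finite ℚ D _
  obtain ⟨n, hn⟩ := exists_trace_smul_eq D (V →ₗ[Dᵐᵒᵖ] D)
  refine ⟨n, fun T f z hT => ?_⟩
  let A : Module.End Dᵐᵒᵖ V →ₗ[ℚ] (V →ₗ[Dᵐᵒᵖ] D) :=
    { toFun := fun a => f.comp a
      map_add' := fun a b => by ext; simp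
      map_smul' := fun r a => by ext; simp }
  let B : (V →ₗ[Dᵐᵒᵖ] D) →ₗ[ℚ] Module.End Dᵐᵒᵖ V :=
    { toFun := fun g =>
        { toFun := fun u => op (g u) • z
          map_add' := fun u v => by simp [add_smul]
          map_smul' := fun d u => by simp [mul_smul] }
      map_add' := fun g h => by ext; simp [add_smul]
      map_smul' := fun r g => by ext; simp }
  have hBA : LinearMap.mulLeft ℚ T = B ∘ₗ A := by
    ext a u
    simp [A, B, hT]
  rw [algTraceQ, hBA, LinearMap.trace_comp_comm']
  refine hn (f z) _ fun g => ?_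
  ext u
  simp [A, B]

section Involution

variable {D : Type*} [DivisionRing D] [CharZero D] {excl : D → D}

theorem IsInvolutionQ.map_one (h : IsInvolutionQ D excl) : excl 1 = 1 := by
  simpa using h.2.2.2 1

theorem IsInvolutionQ.map_zero (h : IsInvolutionQ D excl) : excl 0 = 0 := by
  simpa using h.2.2.2 0

theorem IsInvolutionQ.map_neg (h : IsInvolutionQ D excl) (x : D) : excl (-x) = -excl x := by
  have := h.1 x (-x)
  rw [add_neg_cancel, h.map_zero] at this
  exact (neg_eq_of_add_eq_zero_right this.symm).symm

theorem IsInvolutionQ.map_inv (h : IsInvolutionQ D excl) (x : D) : excl x⁻¹ = (excl x)⁻¹ := by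
  by_cases hx : x = 0
  · simp [hx, h.map_zero]
  · refine (inv_eq_of_mul_eq_one_left ?_).symm
    rw [← h.2.1, mul_inv_cancel₀ hx, h.map_one]

end Involution

/-- Positivity of `†` evaluated at the rank-one operator `u ↦ x · φ(y, u)`. The sign `e = ±1`
covers the Hermitian and the skew-Hermitian case at once. -/
theorem algTraceQ_diag_mul_diag_pos
    {D : Type*} [DivisionRing D] [CharZero D] [FiniteDimensional ℚ D]
    {excl : D → D}
    {V : Type*} [AddCommGroup V] [Module Dᵐᵒᵖ V]
    [Module ℚ V] [FiniteDimensional ℚ V]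
    [SMulCommClass Dᵐᵒᵖ ℚ V] [IsScalarTower ℚ Dᵐᵒᵖ V]
    {φ : V → V → D}
    (hφ : IsSesquilinearForm D V excl φ) (hexcl : IsInvolutionQ D excl)
    {e : D} (he : e = 1 ∨ e = -1)
    (hsym : ∀ v w : V, φ w v = e * excl (φ v w))
    (hns : ∀ v : V, (∀ w : V, φ v w = 0) → v = 0)
    {dag : Module.End Dᵐᵒᵖ V → Module.End Dᵐᵒᵖ V}
    (hadj : ∀ (a : Module.End Dᵐᵒᵖ V) (v w : V), φ (a v) w = φ v (dag a w))
    (hdagpos : ∀ a : Module.End Dᵐᵒᵖ V, a ≠ 0 →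
      0 < algTraceQ (Module.End Dᵐᵒᵖ V) (dag a * a))
    {x y : V} (hx : x ≠ 0) (hy : y ≠ 0) :
    0 < algTraceQ D (e * φ x x * φ y y) := by
  obtain ⟨-, hadd, hsl, hsr⟩ := hφ
  obtain ⟨n, hn⟩ := exists_algTraceQ_end_rankOne D V
  let E : Module.End Dᵐᵒᵖ V :=
    { toFun := fun u => op (φ y u) • x
      map_add' := fun u v => by simp [hadd, add_smul]
      map_smul' := fun d u => by
        have := hsr d.unop y u
        rw [op_unop] at this
        simp [this, mul_smul] }
  have hE : ∀ u, E u = op (φ y u) • x := fun u => rfl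
  have hE0 : E ≠ 0 := by
    intro h0
    refine hy (hns y fun w => ?_)
    have h1 : op (φ y w) • x = 0 := by rw [← hE, h0]; rfl
    simpa [hx] using h1
  let f : V →ₗ[Dᵐᵒᵖ] D :=
    { toFun := fun u => e * φ x x * φ y u
      map_add' := fun u v => by simp [hadd, mul_add]
      map_smul' := fun d u => by
        have := hsr d.unop y u
        rw [op_unop] at this
        simp [this, mul_assoc] }
  -- The pairing is also non-degenerate in its second variable, by symmetry.
  have hns' : ∀ a b : V, (∀ u, φ u a = φ u b) → a = b := by
    intro a b hab
    refine sub_eq_zero.1 (hns _ fun u => ?_)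
    have h1 : φ u (a - b) = 0 := by
      have := hadd u (a - b) b
      rw [sub_add_cancel, hab] at this
      simpa using this
    rw [hsym u, h1, hexcl.map_zero, mul_zero]
  have hT : ∀ u, (dag E * E) u = op (f u) • y := by
    intro w
    refine hns' _ _ fun u => ?_
    have h1 : φ u ((dag E * E) w) = φ (E u) (E w) := (hadj E u (E w)).symm
    have h2 : φ u y = e * excl (φ y u) := hsym y u
    rw [h1, hE, hE, hsl, hsr, hsr, h2]
    change _ = e * excl (φ y u) * (e * φ x x * φ y w)
    rcases he with rfl | rfl <;> simp
  have hpos := hdagpos E hE0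
  rw [hn _ f y hT] at hpos
  exact pos_of_mul_pos_right hpos (Nat.cast_nonneg n)

/-- **Scaling a non-singular (skew-)Hermitian form with positive adjoint involution by
the inverse of a non-zero diagonal value produces a positive definite Hermitian form for
a positive involution of `D`.** -/
theorem scaled_form_positive_definite
    (D : Type*) [DivisionRing D] [CharZero D] [FiniteDimensional ℚ D]
    (excl : D → D) (hexcl : IsInvolutionQ D excl)
    (V : Type*) [AddCommGroup V] [Module Dᵐᵒᵖ V] [Nontrivial V]
    [Module ℚ V] [FiniteDimensional ℚ V] [Module.Finite Dᵐᵒᵖ V]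
    [SMulCommClass Dᵐᵒᵖ ℚ V] [IsScalarTower ℚ Dᵐᵒᵖ V]
    (φ : V → V → D)
    (hφ : IsSesquilinearForm D V excl φ)
    (hsym : (∀ v w : V, φ w v = excl (φ v w)) ∨ (∀ v w : V, φ w v = - excl (φ v w)))
    (hns : ∀ v : V, (∀ w : V, φ v w = 0) → v = 0)
    (dag : Module.End Dᵐᵒᵖ V → Module.End Dᵐᵒᵖ V)
    (hadj : ∀ (a : Module.End Dᵐᵒᵖ V) (v w : V), φ (a v) w = φ v (dag a w))
    (hdagpos : ∀ a : Module.End Dᵐᵒᵖ V, a ≠ 0 →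
      0 < algTraceQ (Module.End Dᵐᵒᵖ V) (dag a * a))
    (v₀ : V) (hv₀ : φ v₀ v₀ ≠ 0) :
    IsPositiveInvolutionQ D (fun d => (φ v₀ v₀)⁻¹ * excl d * φ v₀ v₀) ∧
    IsPosDefHermitianForm D V (fun d => (φ v₀ v₀)⁻¹ * excl d * φ v₀ v₀)
      (fun v w => (φ v₀ v₀)⁻¹ * φ v w) := by
  obtain ⟨e, he, hs⟩ : ∃ e : D, (e = 1 ∨ e = -1) ∧ ∀ v w : V, φ w v = e * excl (φ v w) := by
    rcases hsym with h | h
    · exact ⟨1, Or.inl rfl, by simpa using h⟩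
    · exact ⟨-1, Or.inr rfl, by simpa using h⟩
  have hv₀' : v₀ ≠ 0 := by
    rintro rfl
    have := hφ.2.2.2 0 (0 : V) 0
    rw [op_zero, zero_smul, mul_zero] at this
    exact hv₀ this
  have hpd : ∀ v : V, v ≠ 0 → 0 < algTraceQ D ((φ v₀ v₀)⁻¹ * φ v v) := by
    intro v hv
    have hx : op (φ v₀ v₀)⁻¹ • v₀ ≠ 0 := by simp [hv₀', hv₀]
    have key := algTraceQ_diag_mul_diag_pos hφ hexcl he hs hns hadj hdagpos hx hv
    -- `φ(v₀ s⁻¹, v₀ s⁻¹) = (s⁻¹)! s s⁻¹ = (s!)⁻¹ = e s⁻¹`.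
    have hval : e * φ (op (φ v₀ v₀)⁻¹ • v₀) (op (φ v₀ v₀)⁻¹ • v₀) = (φ v₀ v₀)⁻¹ := by
      rw [hφ.2.2.1, hφ.2.2.2, mul_inv_cancel₀ hv₀, mul_one, hexcl.map_inv]
      have h0 := hs v₀ v₀
      rcases he with rfl | rfl
      · rw [one_mul] at h0 ⊢
        rw [← h0]
      · have h1 : excl (φ v₀ v₀) = - φ v₀ v₀ := by rw [neg_one_mul] at h0; rw [h0, neg_neg, ← h0]
        rw [h1, inv_neg]; simp
    rwa [hval] at key
  have hss : excl (φ v₀ v₀) = e * φ v₀ v₀ := by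
    have h0 := hs v₀ v₀
    rcases he with rfl | rfl
    · rw [one_mul] at h0 ⊢
      exact h0.symm
    · rw [neg_one_mul] at h0 ⊢
      exact neg_eq_iff_eq_neg.1 h0.symm
  obtain ⟨hadd, hmul, hinv, hrat⟩ := id hexcl
  obtain ⟨hal, har, hsl, hsr⟩ := id hφ
  refine ⟨⟨⟨?_, ?_, ?_, ?_⟩, ?_⟩, ⟨?_, ?_, ?_, ?_, ?_⟩, hpd⟩
  · intro x y
    simp only [hadd, mul_add, add_mul]
  · intro x y
    simp only [hmul, mul_assoc, mul_inv_cancel_left₀ hv₀]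
  · intro x
    simp only [hmul, hexcl.map_inv, hss, hinv]
    rcases he with rfl | rfl <;> simp [hv₀]
  · intro r
    simp only [hrat]
    rw [mul_assoc, Algebra.commutes, inv_mul_cancel_left₀ hv₀]
  · intro d hd
    have := hpd (op d • v₀) (by simp [hd, hv₀'])
    rw [hsl, hsr] at this
    simpa only [mul_assoc] using this
  · intro v v' w
    simp only [hal, mul_add]
  · intro v w w'
    simp only [har, mul_add]
  · intro a v w
    simp only [hsl, mul_assoc, mul_inv_cancel_left₀ hv₀]
  · intro b v w
    simp only [hsr, mul_assoc]
  · intro v w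
    simp only [hmul, hexcl.map_inv, hss]
    rw [hs v w]
    rcases he with rfl | rfl <;> simp [mul_assoc, hv₀]
end

section
/- Let p be an odd prime and (E,†) a simple ℚ_p-algebra with involution such that E is split and the center of E is unramified over ℚ_p. Let R ⊂ E be a †-stable maximal order. Let q ∈ R be invertible in E and suppose a ∈ E satisfies m := a†·q·a ∈ ℚ_p^×. Let m' ∈ ℤ_p \ {0} be such that m'·q⁻¹ ∈ R and m'·m⁻¹ is a square in ℚ_p^×. Then there exists b ∈ R such that b†·q·b = m'. -/
/-!
Scaling `a`, one may assume `a† q a = m'`; then `n = a†` satisfies `n† n = a a† = m' q⁻¹ ∈ R`.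

Suppose first that `E ≅ M_d(K)` with `K` an unramified extension of `ℚ_p`. The claim becomes: if
`n† n ∈ R`, then some isometry `c`, meaning `c† c = 1`, satisfies `c n ∈ R`
(`LocalSplit.exists_isometry`); the solution is then `b = (c n)†`. If `n ∉ R`, an explicit
quasi-reflection `c` makes the right ideal `{r ∈ R | n r ∈ R}` strictly larger when `n` is replaced
by `c n` (`LocalSplit.exists_neighbour`), and the process stops because `R` is Noetherian. In the
language of lattices, `c` replaces a unimodular lattice by a `p`-neighbour which is closer to a given
lattice on which the form is integral. The choice of a vector `x ∈ n R` with `p x` integral but `x`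
not, and of an integral vector `y` which pairs with `p x` to a unit, is made inside a Peirce corner
`R e`, where `e` plays the role of a diagonal matrix unit. Division by `2` enters in the
half `s` of `x† x + y† y`, and `c z = z - p (x + y) D⁻¹ (x + y)† z` with `D = p (y† x + s)` is an
isometry since `D + D† = p (x + y)† (x + y)`. No distinction between orthogonal, symplectic and
unitary involutions is needed.

The idempotent `e` comes from the structure of maximal orders
(`LocalSplit.exists_isGoodIdempotent`): `R` stabilizes a lattice over the ring of integers `𝒪` of
`K`, hence equals `M_d(𝒪)` in a suitable basis. Here `𝒪 = ℤ_p[ζ]` for the root of unity `ζ`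
generating `K`, and `p` is a uniformizer of `𝒪` (`LocalSplit.isUnramifiedIntegers_adjoin`).

If instead `E` has several factors, it contains a central idempotent `e` different from `0` and `1`.
Simplicity forces `e† = 1 - e`, maximality of `R` gives `e ∈ R`, and `b = m' q⁻¹ e + (1 - e)` is a
solution.
-/


/-- `dag` is an involution of the `ℚ_p`-algebra `E`. -/
def IsInvolutionQp (p : ℕ) [Fact p.Prime] (E : Type*) [Ring E] [Algebra ℚ_[p] E]
    (dag : E → E) : Prop :=
  (∀ x y : E, dag (x + y) = dag x + dag y) ∧
  (∀ x y : E, dag (x * y) = dag y * dag x) ∧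
  (∀ x : E, dag (dag x) = x) ∧
  (∀ r : ℚ_[p], dag (algebraMap ℚ_[p] E r) = algebraMap ℚ_[p] E r)

/-- Witness that the `ℚ_p`-algebra `E` is split (a finite product of matrix algebras
over fields) with centre a product of unramified extensions of `ℚ_p` (every finite
unramified extension of `ℚ_p` is generated by a root of unity of order prime to `p`). -/
structure UnramifiedSplitting (p : ℕ) [Fact p.Prime] (E : Type*) [Ring E]
    [Algebra ℚ_[p] E] where
  n : ℕ
  K : Fin n → Type
  [fieldK : ∀ i, Field (K i)]
  [algK : ∀ i, Algebra ℚ_[p] (K i)]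
  finK : ∀ i, FiniteDimensional ℚ_[p] (K i)
  unramK : ∀ i, ∃ (m : ℕ) (x : K i), 0 < m ∧ ¬ p ∣ m ∧ IsPrimitiveRoot x m ∧
    Algebra.adjoin ℚ_[p] {x} = ⊤
  d : Fin n → ℕ
  dpos : ∀ i, 0 < d i
  equiv : E ≃ₐ[ℚ_[p]] ∀ i, Matrix (Fin (d i)) (Fin (d i)) (K i)

/-- `R` is an order in the finite-dimensional `ℚ_p`-algebra `E`. -/
def IsOrderZp (p : ℕ) [Fact p.Prime] (E : Type*) [Ring E] [Algebra ℚ_[p] E]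
    [Algebra ℤ_[p] E] [IsScalarTower ℤ_[p] ℚ_[p] E] (R : Subalgebra ℤ_[p] E) : Prop :=
  (Subalgebra.toSubmodule R).FG ∧ Submodule.span ℚ_[p] (R : Set E) = ⊤

/-! ### Isometries and neighbours -/

namespace LocalSplit
section Step
set_option linter.unusedSectionVars false
variable {p : ℕ} [Fact p.Prime] {E : Type*} [Ring E] [Algebra ℚ_[p] E]
    [Algebra ℤ_[p] E] [IsScalarTower ℤ_[p] ℚ_[p] E] {dag : E → E} {R : Subalgebra ℤ_[p] E}

lemma dag_smul (hdag : IsInvolutionQp p E dag) (r : ℚ_[p]) (x : E) :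
    dag (r • x) = r • dag x := by
  rw [Algebra.smul_def, hdag.2.1, hdag.2.2.2, Algebra.smul_def, Algebra.commutes]

lemma dag_zero (hdag : IsInvolutionQp p E dag) : dag 0 = 0 := by
  simpa using hdag.2.2.2 0

lemma dag_one (hdag : IsInvolutionQp p E dag) : dag 1 = 1 := by
  simpa using hdag.2.2.2 1

lemma dag_sub (hdag : IsInvolutionQp p E dag) (x y : E) : dag (x - y) = dag x - dag y := by
  have h := hdag.1 (x - y) y
  rw [sub_add_cancel] at h
  rw [h, add_sub_cancel_right]

lemma smul_mem_order {c : ℚ_[p]} (hc : ‖c‖ ≤ 1) {x : E} (hx : x ∈ R) : c • x ∈ R := by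
  obtain ⟨d, rfl⟩ : ∃ d : ℤ_[p], (d : ℚ_[p]) = c := ⟨⟨c, hc⟩, rfl⟩
  have : (d : ℚ_[p]) • x = d • x := by
    rw [← algebraMap_smul ℚ_[p] d x]; rfl
  rw [this]
  exact R.smul_mem hx _

lemma p_smul_mem {x : E} (hx : x ∈ R) : (p : ℚ_[p]) • x ∈ R :=
  smul_mem_order (Padic.norm_p_lt_one).le hx

lemma p_ne : (p : ℚ_[p]) ≠ 0 := Nat.cast_ne_zero.2 (Fact.out : p.Prime).ne_zero

/-- The properties of an idempotent `e` of an order `R` which hold for a diagonal matrix unit of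
`M_d(𝒪)`, where `𝒪` is a discrete valuation ring with uniformizer `p`. -/
structure IsGoodIdempotent (R : Subalgebra ℤ_[p] E) (e : E) : Prop where
  mem : e ∈ R
  idem : e * e = e
  not_div : ¬ ∃ k ∈ R, e = (p : ℚ_[p]) • k
  /-- `Re / pRe` is generated by each of its nonzero elements. -/
  gen : ∀ x ∈ R, x * e = x → (∃ k ∈ R, x = (p : ℚ_[p]) • k) ∨ ∃ z ∈ R, z * x = e
  /-- `R e` is a faithful lattice whose stabilizer in `E` is `R`. -/
  full : ∀ x : E, (∀ r ∈ R, x * r * e ∈ R) → x ∈ R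

/-- An element of `e† R e` outside `p R` is invertible in the Peirce sense. -/
lemma exists_peirce_inv (hdag : IsInvolutionQp p E dag) (hRdag : ∀ x ∈ R, dag x ∈ R) {e : E}
    (he : IsGoodIdempotent R e) {D : E} (hD : D ∈ R) (h1 : dag e * D = D) (h2 : D * e = D)
    (h3 : ¬ ∃ k ∈ R, D = (p : ℚ_[p]) • k) :
    ∃ D' ∈ R, e * D' = D' ∧ D' * dag e = D' ∧ D' * D = e ∧ D * D' = dag e := by
  obtain ⟨hadd, hmul, hinv, hsc⟩ := id hdag
  have hde : dag e * dag e = dag e := by rw [← hmul, he.idem]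
  obtain ⟨z, hz, hzD⟩ := (he.gen D hD h2).resolve_left h3
  have hl : e * z * dag e * D = e := by
    rw [mul_assoc, h1, mul_assoc, hzD, he.idem]
  -- an idempotent of `eRe` outside `pR` equals `e`
  have key : ∀ f ∈ R, f * f = f → e * f = f → f * e = f → (¬ ∃ k ∈ R, f = (p : ℚ_[p]) • k) →
      f = e := by
    intro f hf hff hef hfe hn
    obtain ⟨y, hy, hyf⟩ := (he.gen f hf hfe).resolve_left hn
    calc f = e * f := hef.symm
      _ = y * (f * f) := by rw [← hyf, mul_assoc]
      _ = e := by rw [hff, hyf]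
  refine ⟨e * z * dag e, R.mul_mem (R.mul_mem he.mem hz) (hRdag _ he.mem), ?_, ?_, hl, ?_⟩
  · rw [← mul_assoc, ← mul_assoc, he.idem]
  · rw [mul_assoc, hde]
  · set D' := e * z * dag e with hD'
    have hD'R : D' ∈ R := R.mul_mem (R.mul_mem he.mem hz) (hRdag _ he.mem)
    have hD'e : D' * dag e = D' := by rw [hD', mul_assoc, hde]
    have hidem : (D * D') * (D * D') = D * D' := by
      rw [mul_assoc, ← mul_assoc D', hl, ← mul_assoc, h2]
    set f := dag (D * D') with hf
    have hfR : f ∈ R := hRdag _ (R.mul_mem hD hD'R)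
    have hff : f * f = f := by rw [hf, ← hmul, hidem]
    have hef : e * f = f := by
      rw [hf]; nth_rw 1 [← hinv e]
      rw [← hmul, mul_assoc, hD'e]
    have hfe : f * e = f := by
      rw [hf]; nth_rw 1 [← hinv e]
      rw [← hmul, ← mul_assoc, h1]
    have hf0 : f ≠ 0 := by
      intro h0
      have h00 : D * D' = 0 := by rw [← hinv (D * D'), ← hf, h0, dag_zero hdag]
      apply he.not_div
      refine ⟨0, R.zero_mem, ?_⟩
      rw [smul_zero, ← he.idem]
      nth_rw 1 [← hl]
      rw [← hl, ← mul_assoc, mul_assoc D' D D', h00, mul_zero, zero_mul]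
    have hfe' : f = e := by
      by_cases hn : ∃ k ∈ R, f = (p : ℚ_[p]) • k
      · exfalso
        apply hf0
        have : e - f = e := by
          apply key
          · exact R.sub_mem he.mem hfR
          · rw [mul_sub, sub_mul, sub_mul, he.idem, hfe, hff, hef]; simp
          · rw [mul_sub, he.idem, hef]
          · rw [sub_mul, he.idem, hfe]
          · rintro ⟨k, hk, hk'⟩
            obtain ⟨l, hl, hl'⟩ := hn
            exact he.not_div ⟨k + l, R.add_mem hk hl, by
              rw [smul_add, ← hk', ← hl', sub_add_cancel]⟩
        simpa using this
      · exact key f hfR hff hef hfe hn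
    rw [← hinv (D * D'), ← hf, hfe']

/-- The form `(r, s) ↦ (r e)† s e` takes a value outside `p R`: otherwise `p⁻¹ e†` would stabilize
`R e`, and so lie in `R`. -/
lemma exists_unit_form_value (hdag : IsInvolutionQp p E dag) (hRdag : ∀ x ∈ R, dag x ∈ R) {e : E}
    (he : IsGoodIdempotent R e) :
    ∃ w ∈ R, dag e * w = w ∧ w * e = w ∧ ¬ ∃ k ∈ R, w = (p : ℚ_[p]) • k := by
  obtain ⟨hadd, hmul, hinv, hsc⟩ := id hdag
  by_contra! hcon
  have hde : dag e * dag e = dag e := by rw [← hmul, he.idem]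
  have h1 : (p : ℚ_[p])⁻¹ • dag e ∈ R := by
    apply he.full
    intro r hr
    obtain ⟨k, hk, hk'⟩ := hcon (dag e * r * e)
      (R.mul_mem (R.mul_mem (hRdag _ he.mem) hr) he.mem)
      (by rw [← mul_assoc, ← mul_assoc, hde]) (by rw [mul_assoc, he.idem])
    rw [smul_mul_assoc, smul_mul_assoc, hk', inv_smul_smul₀ p_ne]
    exact hk
  refine he.not_div ⟨_, hRdag _ h1, ?_⟩
  rw [dag_smul hdag, hinv, smul_inv_smul₀ p_ne]

/-- If `n†n` is integral and `n` is not, some isometry `c` enlarges the right ideal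
`{r ∈ R | n r ∈ R}`.  In terms of lattices, `c` carries the unimodular lattice to one of its
`p`-neighbours; it is the quasi-reflection `z ↦ z - p (x+y) D⁻¹ (x+y)† z` with
`D + D† = p (x+y)†(x+y)`. -/
lemma exists_neighbour (hp2 : p ≠ 2) (hdag : IsInvolutionQp p E dag)
    (hRdag : ∀ x ∈ R, dag x ∈ R)
    (hspan : ∀ x : E, ∃ k : ℕ, (p : ℚ_[p]) ^ k • x ∈ R) {e : E}
    (he : IsGoodIdempotent R e) {n : E} (hn : dag n * n ∈ R) (hnR : n ∉ R) :
    ∃ c : E, dag c * c = 1 ∧ (∀ r ∈ R, n * r ∈ R → c * n * r ∈ R) ∧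
      ∃ r ∈ R, n * r ∉ R ∧ c * n * r ∈ R := by
  obtain ⟨hadd, hmul, hinv, hsc⟩ := id hdag
  have hde : dag e * dag e = dag e := by rw [← hmul, he.idem]
  have h2n : ‖(2 : ℚ_[p])⁻¹‖ ≤ 1 := by
    have h2 : ‖((2 : ℕ) : ℚ_[p])‖ = 1 := by
      rw [Padic.norm_natCast_eq_one_iff]
      exact (Nat.coprime_primes Fact.out Nat.prime_two).2 hp2
    rw [norm_inv]
    norm_num at h2
    rw [h2, inv_one]
  -- `x = n r₀` lies in `n R e`, is not integral, but `p x` is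
  obtain ⟨r1, hr1, hnr1⟩ : ∃ r ∈ R, n * r * e ∉ R := by
    by_contra! h
    exact hnR (he.full n h)
  classical
  obtain ⟨r0, hr0, hr0e, hx, hpx⟩ : ∃ r ∈ R, r * e = r ∧ n * r ∉ R ∧
      (p : ℚ_[p]) • (n * r) ∈ R := by
    have hex := hspan (n * r1 * e)
    have hspec := Nat.find_spec hex
    have hmin : ∀ m < Nat.find hex, _ := fun m hm => Nat.find_min hex hm
    have hpos : Nat.find hex ≠ 0 := by
      intro h0
      rw [h0, pow_zero, one_smul] at hspec
      exact hnr1 hspec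
    obtain ⟨k, hk⟩ := Nat.exists_eq_succ_of_ne_zero hpos
    rw [hk] at hspec hmin
    refine ⟨(p : ℚ_[p]) ^ k • (r1 * e), ?_, ?_, ?_, ?_⟩
    · apply smul_mem_order _ (R.mul_mem hr1 he.mem)
      rw [norm_pow]
      exact pow_le_one₀ (norm_nonneg _) Padic.norm_p_lt_one.le
    · rw [smul_mul_assoc, mul_assoc, he.idem]
    · rw [mul_smul_comm, ← mul_assoc]
      exact hmin k (Nat.lt_succ_self k)
    · rw [mul_smul_comm, ← mul_assoc, smul_smul, ← pow_succ']
      exact hspec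
  obtain ⟨x, hxdef⟩ : ∃ x, x = n * r0 := ⟨_, rfl⟩
  rw [← hxdef] at hx hpx
  have hxe : x * e = x := by rw [hxdef, mul_assoc, hr0e]
  obtain ⟨z, hz, hzx⟩ := (he.gen _ hpx (by rw [smul_mul_assoc, hxe])).resolve_left (by
    rintro ⟨k, hk, hk'⟩
    exact hx ((smul_right_injective E p_ne hk') ▸ hk))
  obtain ⟨w, hw, hew, hwe, hwp⟩ := exists_unit_form_value hdag hRdag he
  -- `y` is chosen such that `p y†x = w` is invertible in the Peirce sense
  obtain ⟨y, hydef⟩ : ∃ y, y = dag (w * z) := ⟨_, rfl⟩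
  have hyR : y ∈ R := hydef ▸ hRdag _ (R.mul_mem hw hz)
  have hye : y * e = y := by
    rw [hydef]; nth_rw 1 [← hinv e]
    rw [← hmul, ← mul_assoc, hew]
  have hyx : (p : ℚ_[p]) • (dag y * x) = w := by
    rw [hydef, hinv, ← mul_smul_comm, mul_assoc, hzx, hwe]
  have hexd : dag e * dag x = dag x := by rw [← hmul, hxe]
  have heyd : dag e * dag y = dag y := by rw [← hmul, hye]
  have hxx : dag x * x ∈ R := by
    have : dag x * x = dag r0 * (dag n * n) * r0 := by
      rw [hxdef, hmul]; simp only [mul_assoc]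
    rw [this]
    exact R.mul_mem (R.mul_mem (hRdag _ hr0) hn) hr0
  have hyy : dag y * y ∈ R := R.mul_mem (hRdag _ hyR) hyR
  obtain ⟨s, hs⟩ : ∃ s, s = (2 : ℚ_[p])⁻¹ • (dag x * x + dag y * y) := ⟨_, rfl⟩
  have hsR : s ∈ R := hs ▸ smul_mem_order h2n (R.add_mem hxx hyy)
  have hss : s + s = dag x * x + dag y * y := by
    rw [hs, ← add_smul]; norm_num
  have hsd : dag s = s := by
    rw [hs, dag_smul hdag, hadd, hmul, hmul, hinv, hinv]
  obtain ⟨D, hDdef⟩ : ∃ D, D = w + (p : ℚ_[p]) • s := ⟨_, rfl⟩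
  have hDR : D ∈ R := hDdef ▸ R.add_mem hw (p_smul_mem hsR)
  obtain ⟨D', hD'R, heD', hD'e, hD'D, hDD'⟩ := exists_peirce_inv hdag hRdag he hDR
    (by rw [hDdef, mul_add, hew, mul_smul_comm, hs, mul_smul_comm, mul_add, ← mul_assoc, hexd,
          ← mul_assoc, heyd])
    (by rw [hDdef, add_mul, hwe, smul_mul_assoc, hs, smul_mul_assoc, add_mul, mul_assoc, hxe,
          mul_assoc, hye])
    (by
      rintro ⟨k, hk, hk'⟩
      exact hwp ⟨k - s, R.sub_mem hk hsR, by rw [smul_sub, ← hk', hDdef, add_sub_cancel_right]⟩)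
  obtain ⟨t, ht⟩ : ∃ t, t = x + y := ⟨_, rfl⟩
  have hte : t * e = t := by rw [ht, add_mul, hxe, hye]
  have hptR : (p : ℚ_[p]) • t ∈ R := by
    rw [ht, smul_add]; exact R.add_mem hpx (p_smul_mem hyR)
  have hxyd : (p : ℚ_[p]) • (dag x * y) = dag w := by
    rw [← hyx, dag_smul hdag, hmul, hinv]
  have htt : (p : ℚ_[p]) • (dag t * t) = D + dag D := by
    have : dag t * t = (dag x * x + dag y * y) + dag y * x + dag x * y := by
      rw [ht, hadd]; noncomm_ring
    rw [this, smul_add, smul_add, hyx, hxyd, ← hss, hDdef, hadd, dag_smul hdag, hsd, smul_add]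
    abel
  obtain ⟨c, hc⟩ : ∃ c, c = 1 - (p : ℚ_[p]) • (t * D' * dag t) := ⟨_, rfl⟩
  have hcd : dag c = 1 - (p : ℚ_[p]) • (t * dag D' * dag t) := by
    rw [hc, dag_sub hdag, dag_one hdag, dag_smul hdag, hmul, hmul, hinv, mul_assoc]
  refine ⟨c, ?_, ?_, r0, hr0, hxdef ▸ hx, ?_⟩
  · have hmid : dag D' * ((p : ℚ_[p]) • (dag t * t)) * D' = dag D' + D' := by
      rw [htt, mul_add, add_mul, mul_assoc, hDD', ← hmul e, heD', ← hmul, hDD', hinv, heD']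
    have hprod : ((p : ℚ_[p]) • (t * dag D' * dag t)) * ((p : ℚ_[p]) • (t * D' * dag t)) =
        (p : ℚ_[p]) • (t * (dag D' * ((p : ℚ_[p]) • (dag t * t)) * D') * dag t) := by
      simp only [smul_mul_assoc, mul_smul_comm, mul_assoc]
    rw [hcd, hc, sub_mul, mul_sub, mul_sub, hprod, hmid, mul_add, add_mul _ _ (dag t), smul_add]
    simp only [one_mul, mul_one]
    abel
  · intro r hr hnr
    have hxr : dag x * (n * r) ∈ R := by
      have : dag x * (n * r) = dag r0 * (dag n * n) * r := by
        rw [hxdef, hmul]; simp only [mul_assoc]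
      rw [this]
      exact R.mul_mem (R.mul_mem (hRdag _ hr0) hn) hr
    have : c * n * r = n * r - ((p : ℚ_[p]) • t) * D' * (dag x * (n * r) + dag y * (n * r)) := by
      rw [hc, ← add_mul, ← hadd, ← ht]
      simp only [sub_mul, one_mul, smul_mul_assoc, mul_assoc]
    rw [this]
    exact R.sub_mem hnr (R.mul_mem (R.mul_mem hptR hD'R)
      (R.add_mem hxr (R.mul_mem (hRdag _ hyR) hnr)))
  · -- `p (x+y)†x = D + p (x†x - s)`, so `c x = -y - p (x+y) D⁻¹ (x†x - s)`
    have h1 : (p : ℚ_[p]) • (dag t * x) = D + (p : ℚ_[p]) • (dag x * x - s) := by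
      rw [ht, hadd, add_mul, smul_add, hyx, hDdef, smul_sub]; abel
    have : c * n * r0 = - y - ((p : ℚ_[p]) • t) * D' * (dag x * x - s) := by
      have h3 : c * n * r0 = x - t * D' * ((p : ℚ_[p]) • (dag t * x)) := by
        rw [mul_assoc, ← hxdef, hc]
        simp only [sub_mul, one_mul, smul_mul_assoc, mul_smul_comm, mul_assoc]
      rw [h3, h1, mul_add, mul_assoc, hD'D, hte, ht]
      simp only [smul_mul_assoc, mul_smul_comm]
      abel
    rw [this]
    exact R.sub_mem (R.neg_mem hyR) (R.mul_mem (R.mul_mem hptR hD'R) (R.sub_mem hxx hsR))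

/-- An element with integral `n†n` becomes integral after multiplication by an isometry: by
`exists_neighbour` the right ideal `{r ∈ R | n r ∈ R}` can be enlarged until it contains `1`, since
`R` is Noetherian. -/
lemma exists_isometry (hp2 : p ≠ 2) (hdag : IsInvolutionQp p E dag)
    (hRdag : ∀ x ∈ R, dag x ∈ R) (hRfg : (Subalgebra.toSubmodule R).FG)
    (hspan : ∀ x : E, ∃ k : ℕ, (p : ℚ_[p]) ^ k • x ∈ R) {e : E}
    (he : IsGoodIdempotent R e) (n : E) (hn : dag n * n ∈ R) :
    ∃ c : E, dag c * c = 1 ∧ c * n ∈ R := by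
  have : IsNoetherian ℤ_[p] (Subalgebra.toSubmodule R) := isNoetherian_of_fg_of_noetherian _ hRfg
  let I : E → Submodule ℤ_[p] (Subalgebra.toSubmodule R) := fun n =>
    (Submodule.comap (LinearMap.mulLeft ℤ_[p] n) (Subalgebra.toSubmodule R)).comap
      (Subalgebra.toSubmodule R).subtype
  have hI : ∀ n (r : Subalgebra.toSubmodule R), r ∈ I n ↔ n * (r : E) ∈ R := fun n r => Iff.rfl
  induction h : I n using WellFoundedGT.induction generalizing n with
  | ind J ih =>
    by_cases hnR : n ∈ R
    · exact ⟨1, by rw [dag_one hdag, one_mul], by rwa [one_mul]⟩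
    obtain ⟨c, hc, hle, r, hr, hnr, hcr⟩ := exists_neighbour hp2 hdag hRdag hspan he hn hnR
    have hcn : dag (c * n) * (c * n) = dag n * n := by
      rw [hdag.2.1, mul_assoc, ← mul_assoc (dag c), hc, one_mul]
    have hlt : I n < I (c * n) := by
      refine lt_of_le_of_ne (fun s hs => hle s s.2 hs) (fun heq => hnr ?_)
      have : (⟨r, hr⟩ : Subalgebra.toSubmodule R) ∈ I (c * n) := hcr
      rw [← heq] at this
      exact this
    obtain ⟨c', hc', hc'n⟩ := ih (I (c * n)) (h ▸ hlt) (c * n) (hcn ▸ hn) rfl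
    refine ⟨c' * c, ?_, by rwa [mul_assoc]⟩
    rw [hdag.2.1, mul_assoc, ← mul_assoc (dag c'), hc', one_mul, hc]
end Step
end LocalSplit

/-! ### Integers of unramified extensions -/

namespace LocalSplit
open Polynomial in
/-- If the inverse of `z` is integral, it is a polynomial in `z`. -/
lemma mem_of_isIntegral_inv {A K : Type*} [CommRing A] [Field K] [Algebra A K]
    (O : Subalgebra A K) {z : K} (hz : z ∈ O) (hi : IsIntegral A z⁻¹) : z⁻¹ ∈ O := by
  by_cases hz0 : z = 0
  · rw [hz0, inv_zero]; exact O.zero_mem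
  have : z⁻¹ ∈ integralClosure O K := hi.tower_top
  obtain ⟨f, hf, hfe⟩ := this
  let _ : Invertible z⁻¹ := invertibleOfNonzero (inv_ne_zero hz0)
  have h1 := eval₂_reverse_mul_pow (algebraMap O K) (z⁻¹) f
  rw [hfe] at h1
  simp only [invOf_eq_inv, inv_inv] at h1
  have h2 : eval₂ (algebraMap O K) z f.reverse = 0 := by
    rcases mul_eq_zero.1 h1 with h | h
    · exact h
    · exact absurd h (pow_ne_zero _ (inv_ne_zero hz0))
  -- `f.reverse = 1 + X * g`, so that `z * g(z) = -1`
  have h3 : f.reverse = X * divX f.reverse + C (f.reverse.coeff 0) := (X_mul_divX_add _).symm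
  rw [coeff_zero_reverse, hf.leadingCoeff] at h3
  rw [h3, eval₂_add, eval₂_mul, eval₂_X, eval₂_C, map_one] at h2
  have h4 : z⁻¹ = - eval₂ (algebraMap O K) z (divX f.reverse) := by
    field_simp
    linear_combination h2
  rw [h4]
  apply O.neg_mem
  have : eval₂ (algebraMap O K) z (divX f.reverse) =
      ((divX f.reverse).eval ⟨z, hz⟩ : O) := by
    exact eval₂_at_apply (algebraMap O K) ⟨z, hz⟩
  rw [this]
  exact Subtype.prop _

section
variable {p : ℕ} [Fact p.Prime] {K : Type*} [Field K] [Algebra ℚ_[p] K]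
  [Algebra ℤ_[p] K] [IsScalarTower ℤ_[p] ℚ_[p] K]

open Polynomial in
lemma isIntegral_of_spectralNorm_le [FiniteDimensional ℚ_[p] K] {u : K}
    (hu : spectralNorm ℚ_[p] K u ≤ 1) : IsIntegral ℤ_[p] u := by
  have hint : IsIntegral ℚ_[p] u := IsIntegral.of_finite _ _
  have hmon := minpoly.monic hint
  have h := (spectralValue_le_one_iff hmon).1 hu
  have hl : minpoly ℚ_[p] u ∈ lifts (algebraMap ℤ_[p] ℚ_[p]) := by
    rw [lifts_iff_coeff_lifts]
    exact fun n => ⟨⟨_, h n⟩, rfl⟩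
  obtain ⟨q, hq, -, hqm⟩ := lifts_and_natDegree_eq_and_monic hl hmon
  refine ⟨q, hqm, ?_⟩
  rw [IsScalarTower.algebraMap_eq ℤ_[p] ℚ_[p] K, ← eval₂_map, hq]
  exact minpoly.aeval _ _

/-- A `ℤ_p`-lattice and subring of `K` in which `p` generates the maximal ideal; such a subring
is the ring of integers of an unramified field extension `K` of `ℚ_p`. -/
structure IsUnramifiedIntegers (O : Subalgebra ℤ_[p] K) : Prop where
  fg : (Subalgebra.toSubmodule O).FG
  /-- Every element is a unit or divisible by `p`. -/
  dich : ∀ x ∈ O, (∃ y ∈ O, x = (p : K) * y) ∨ x⁻¹ ∈ O ∧ x ≠ 0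
  /-- The elements of `O` span `K` over `ℚ_p`. -/
  frac : ∀ x : K, ∃ k : ℕ, (p : K) ^ k * x ∈ O

variable (p K) in
omit [Algebra ℤ_[p] K] [IsScalarTower ℤ_[p] ℚ_[p] K] in
lemma natCast_p_ne_zero : (p : K) ≠ 0 := by
  have := charZero_of_injective_algebraMap (algebraMap ℚ_[p] K).injective
  exact Nat.cast_ne_zero.2 (Fact.out : p.Prime).ne_zero

lemma IsUnramifiedIntegers.inv_p_notMem {O : Subalgebra ℤ_[p] K} (hO : IsUnramifiedIntegers O) :
    (p : K)⁻¹ ∉ O := by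
  intro h
  have hi : IsIntegral ℤ_[p] (p : K)⁻¹ := IsIntegral.of_mem_of_fg O hO.fg _ h
  have h2 : (p : K)⁻¹ = algebraMap ℚ_[p] K ((p : ℚ_[p])⁻¹) := by simp
  rw [h2, isIntegral_algebraMap_iff (algebraMap ℚ_[p] K).injective] at hi
  obtain ⟨z, hz⟩ := IsIntegrallyClosed.isIntegral_iff.1 hi
  have h3 : ‖(p : ℚ_[p])⁻¹‖ ≤ 1 := hz ▸ z.2
  rw [norm_inv] at h3
  have h4 : ‖(p : ℚ_[p])‖ < 1 := Padic.norm_p_lt_one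
  have h5 : 0 < ‖(p : ℚ_[p])‖ := norm_pos_iff.2 (Nat.cast_ne_zero.2 (Fact.out : p.Prime).ne_zero)
  exact absurd h3 (not_le.2 ((one_lt_inv₀ h5).2 h4))

lemma exists_p_pow_mul_int (c : ℚ_[p]) : ∃ k : ℕ, ‖(p : ℚ_[p]) ^ k * c‖ ≤ 1 := by
  have h : Filter.Tendsto (fun k : ℕ => ‖(p : ℚ_[p])‖ ^ k * ‖c‖) Filter.atTop (nhds (0 * ‖c‖)) :=
    (tendsto_pow_atTop_nhds_zero_of_lt_one (norm_nonneg _) Padic.norm_p_lt_one).mul_const _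
  rw [zero_mul] at h
  obtain ⟨k, hk⟩ := (h.eventually (gt_mem_nhds one_pos)).exists
  exact ⟨k, by rw [norm_mul, norm_pow]; exact hk.le⟩

/-- If `K = ℚ_p(ζ)` with `ζ` a root of unity of order prime to `p`, then `p` generates the maximal
ideal of `ℤ_p[ζ]`: with `q` a power of `p` such that `ζ ^ q = ζ`, every `x ∈ ℤ_p[ζ]` satisfies
`x ^ q ≡ x` modulo `p`, while `ℤ_p[ζ]` is local because the absolute value extends to `K`. -/
lemma isUnramifiedIntegers_adjoin [FiniteDimensional ℚ_[p] K] {m : ℕ} {ζ : K} (hm0 : 0 < m)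
    (hm : ¬ p ∣ m) (hζ : IsPrimitiveRoot ζ m) (htop : Algebra.adjoin ℚ_[p] {ζ} = ⊤) :
    IsUnramifiedIntegers (Algebra.adjoin ℤ_[p] {ζ}) := by
  have hp : p.Prime := Fact.out
  have halg : Algebra.IsAlgebraic ℚ_[p] K := Algebra.IsAlgebraic.of_finite _ _
  set O := Algebra.adjoin ℤ_[p] {ζ} with hOdef
  have hζO : ζ ∈ O := Algebra.self_mem_adjoin_singleton _ _
  have hnat : ∀ k : ℕ, (k : K) ∈ O := fun k => natCast_mem O k
  refine ⟨?_, ?_, ?_⟩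
  · apply IsIntegral.fg_adjoin_singleton
    refine ⟨Polynomial.X ^ m - 1, Polynomial.monic_X_pow_sub_C 1 hm0.ne', ?_⟩
    simp [hζ.pow_eq_one]
  · have hloc : ∀ z ∈ O, (z⁻¹ ∈ O ∧ z ≠ 0) ∨ ((1 - z)⁻¹ ∈ O ∧ 1 - z ≠ 0) := by
      -- one of `z` and `1 - z` has absolute value at least `1`, so its inverse is integral
      have hbig : ∀ z ∈ O, 1 ≤ spectralNorm ℚ_[p] K z → z⁻¹ ∈ O ∧ z ≠ 0 := by
        intro z hz h1
        have hz0 : z ≠ 0 := by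
          rintro rfl
          rw [spectralNorm_zero] at h1
          norm_num at h1
        refine ⟨mem_of_isIntegral_inv O hz (isIntegral_of_spectralNorm_le ?_), hz0⟩
        have h2 : spectralMulAlgNorm ℚ_[p] K (z⁻¹ * z) = 1 := by
          rw [inv_mul_cancel₀ hz0, map_one]
        rw [map_mul, spectralMulAlgNorm_def, spectralMulAlgNorm_def] at h2
        by_contra! h3
        nlinarith
      intro z hz
      have h := isNonarchimedean_spectralNorm (K := ℚ_[p]) (L := K) z (1 - z)
      rw [add_sub_cancel, spectralNorm_one, le_max_iff] at h
      exact h.imp (hbig z hz) (hbig _ (O.sub_mem O.one_mem hz))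
    obtain ⟨k, hk0, hk⟩ : ∃ k, 0 < k ∧ m ∣ p ^ k - 1 := by
      refine ⟨m.totient, Nat.totient_pos.2 hm0, ?_⟩
      exact (Nat.modEq_iff_dvd' (Nat.one_le_pow _ _ hp.pos)).1
        (Nat.ModEq.pow_totient ((Nat.Prime.coprime_iff_not_dvd hp).2 hm)).symm
    have hq : 2 ≤ p ^ k := le_trans hp.two_le (Nat.le_self_pow hk0.ne' p)
    obtain ⟨l, hl⟩ : ∃ l, p ^ k = l + 2 := ⟨p ^ k - 2, by omega⟩
    have hfrob : ∀ x ∈ O, ∃ y ∈ O, x ^ p ^ k - x = (p : K) * y := by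
      intro x hx
      induction hx using Algebra.adjoin_induction with
      | mem x hx =>
        rw [Set.mem_singleton_iff] at hx
        refine ⟨0, O.zero_mem, ?_⟩
        have h1 : p ^ k = (p ^ k - 1) + 1 := by omega
        obtain ⟨c, hc⟩ := hk
        rw [hx, h1, pow_succ, hc, pow_mul, hζ.pow_eq_one, one_pow, one_mul, mul_zero, sub_self]
      | algebraMap r =>
        have h1 : r ^ p ^ k - r ∈ RingHom.ker (PadicInt.toZMod : ℤ_[p] →+* ZMod p) := by
          rw [RingHom.mem_ker, map_sub, map_pow, ZMod.pow_card_pow, sub_self]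
        rw [PadicInt.ker_toZMod, PadicInt.maximalIdeal_eq_span_p, Ideal.mem_span_singleton] at h1
        obtain ⟨c, hc⟩ := h1
        refine ⟨algebraMap _ _ c, O.algebraMap_mem c, ?_⟩
        rw [← map_pow, ← map_sub, hc, map_mul, map_natCast]
      | add x y hx hy ihx ihy =>
        obtain ⟨a, ha, hax⟩ := ihx
        obtain ⟨b, hb, hby⟩ := ihy
        obtain ⟨r, hr⟩ := exists_add_pow_prime_pow_eq hp (⟨x, hx⟩ : O) (⟨y, hy⟩ : O) k
        have hr' := congrArg (Subtype.val) hr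
        change (x + y) ^ p ^ k = x ^ p ^ k + y ^ p ^ k + (p : K) * x * y * r at hr'
        refine ⟨a + b + x * y * r, O.add_mem (O.add_mem ha hb) (O.mul_mem (O.mul_mem hx hy) r.2),
          ?_⟩
        rw [hr']
        linear_combination hax + hby
      | mul x y hx hy ihx ihy =>
        obtain ⟨a, ha, hax⟩ := ihx
        obtain ⟨b, hb, hby⟩ := ihy
        refine ⟨a * y ^ p ^ k + x * b,
          O.add_mem (O.mul_mem ha (O.pow_mem hy _)) (O.mul_mem hx hb), ?_⟩
        rw [mul_pow]
        linear_combination hax * y ^ p ^ k + x * hby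
    intro x hx
    obtain ⟨y, hy, hxy⟩ := hfrob x hx
    rcases hloc (x ^ (l + 1)) (O.pow_mem hx _) with ⟨h1, h2⟩ | ⟨h1, h2⟩
    · right
      have hx0 : x ≠ 0 := by
        rintro rfl
        simp at h2
      refine ⟨?_, hx0⟩
      have : x⁻¹ = x ^ l * (x ^ (l + 1))⁻¹ := by
        field_simp
        ring
      rw [this]
      exact O.mul_mem (O.pow_mem hx _) h1
    · left
      refine ⟨-(y * (1 - x ^ (l + 1))⁻¹), O.neg_mem (O.mul_mem hy h1), ?_⟩
      rw [hl] at hxy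
      field_simp
      linear_combination -hxy
  · intro x
    have hx : x ∈ Algebra.adjoin ℚ_[p] {ζ} := htop ▸ Algebra.mem_top
    have hup : ∀ (x : K) (k l : ℕ), (p : K) ^ k * x ∈ O → (p : K) ^ (l + k) * x ∈ O := by
      intro x k l h
      rw [pow_add, mul_assoc]
      exact O.mul_mem (O.pow_mem (hnat p) _) h
    induction hx using Algebra.adjoin_induction with
    | mem x hx =>
      rw [Set.mem_singleton_iff] at hx
      exact ⟨0, by rw [hx, pow_zero, one_mul]; exact hζO⟩
    | algebraMap r =>
      obtain ⟨k, hk⟩ := exists_p_pow_mul_int r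
      refine ⟨k, ?_⟩
      obtain ⟨d, hd⟩ : ∃ d : ℤ_[p], algebraMap ℤ_[p] ℚ_[p] d = (p : ℚ_[p]) ^ k * r :=
        ⟨⟨_, hk⟩, rfl⟩
      have h2 := O.algebraMap_mem d
      rwa [IsScalarTower.algebraMap_apply ℤ_[p] ℚ_[p] K, hd, map_mul, map_pow, map_natCast] at h2
    | add x y hx hy ihx ihy =>
      obtain ⟨a, ha⟩ := ihx
      obtain ⟨b, hb⟩ := ihy
      refine ⟨a + b, ?_⟩
      rw [mul_add]
      exact O.add_mem (by rw [add_comm a b]; exact hup _ _ _ ha) (hup _ _ _ hb)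
    | mul x y hx hy ihx ihy =>
      obtain ⟨a, ha⟩ := ihx
      obtain ⟨b, hb⟩ := ihy
      refine ⟨a + b, ?_⟩
      have : (p : K) ^ (a + b) * (x * y) = ((p : K) ^ a * x) * ((p : K) ^ b * y) := by ring
      rw [this]
      exact O.mul_mem ha hb

/-- A Noetherian local domain with principal maximal ideal is a principal ideal ring. -/
lemma IsUnramifiedIntegers.isPrincipalIdealRing {O : Subalgebra ℤ_[p] K}
    (hO : IsUnramifiedIntegers O) : IsPrincipalIdealRing O := by
  have hp0 : (p : K) ≠ 0 := natCast_p_ne_zero p K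
  have hunit : ∀ x : O, (∃ y : O, x = p * y) ∨ IsUnit x := by
    intro x
    rcases hO.dich x x.2 with ⟨y, hy, h⟩ | ⟨h, h0⟩
    · exact Or.inl ⟨⟨y, hy⟩, Subtype.ext (by simpa using h)⟩
    · exact Or.inr (IsUnit.of_mul_eq_one ⟨_, h⟩ (Subtype.ext (mul_inv_cancel₀ h0)))
  have hpu : ¬ IsUnit (p : O) := by
    rintro ⟨u, hu⟩
    apply hO.inv_p_notMem
    have h1 : (p : K) * ((u⁻¹ : Oˣ) : O) = 1 := by
      have := congrArg Subtype.val (u.mul_inv)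
      rw [hu] at this
      simpa using this
    rw [inv_eq_of_mul_eq_one_right h1]
    exact Subtype.prop _
  have hloc : IsLocalRing O := by
    apply IsLocalRing.of_nonunits_add
    intro a b ha hb
    obtain ⟨y, rfl⟩ := (hunit a).resolve_right ha
    obtain ⟨z, rfl⟩ := (hunit b).resolve_right hb
    rw [← mul_add]
    exact fun h => hpu (isUnit_of_mul_isUnit_left h)
  have hfin : Module.Finite ℤ_[p] O := Module.Finite.iff_fg.2 hO.fg
  have hnoeth : IsNoetherianRing O := IsNoetherianRing.of_finite ℤ_[p] O
  refine ((tfae_of_isNoetherianRing_of_isLocalRing_of_isDomain O).out 0 4).2 ?_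
  refine ⟨(p : O), ?_⟩
  ext x
  rw [IsLocalRing.mem_maximalIdeal, Ideal.submodule_span_eq, Ideal.mem_span_singleton]
  constructor
  · intro h
    exact (hunit x).resolve_right h
  · rintro ⟨y, rfl⟩ h
    exact hpu (isUnit_of_mul_isUnit_left h)

omit [IsScalarTower ℤ_[p] ℚ_[p] K] in
lemma IsUnramifiedIntegers.isFractionRing {O : Subalgebra ℤ_[p] K}
    (hO : IsUnramifiedIntegers O) : IsFractionRing O K := by
  have hp0 : (p : K) ≠ 0 := natCast_p_ne_zero p K
  apply IsFractionRing.of_field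
  intro x
  obtain ⟨k, hk⟩ := hO.frac x
  refine ⟨⟨_, hk⟩, (p : O) ^ k, ?_⟩
  simp only [map_pow, map_natCast]
  change x = (p ^ k * x) / p ^ k
  field_simp
end
end LocalSplit

/-! ### Maximal orders in matrix algebras -/

namespace LocalSplit
section
variable {p : ℕ} [Fact p.Prime] {K : Type*} [Field K] [Algebra ℚ_[p] K]
  [Algebra ℤ_[p] K] [IsScalarTower ℤ_[p] ℚ_[p] K]
  {E : Type*} [Ring E] [Algebra ℚ_[p] E] [Algebra ℤ_[p] E] [IsScalarTower ℤ_[p] ℚ_[p] E]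

lemma exists_pow_smul_mem_order {R : Subalgebra ℤ_[p] E} (hR : IsOrderZp p E R) (x : E) :
    ∃ k : ℕ, (p : ℚ_[p]) ^ k • x ∈ R := by
  have hx : x ∈ Submodule.span ℚ_[p] (R : Set E) := hR.2 ▸ Submodule.mem_top
  have hup : ∀ (x : E) (k l : ℕ), (p : ℚ_[p]) ^ k • x ∈ R → (p : ℚ_[p]) ^ (l + k) • x ∈ R := by
    intro x k l h
    rw [pow_add, mul_smul]
    apply smul_mem_order _ h
    rw [norm_pow]
    exact pow_le_one₀ (norm_nonneg _) Padic.norm_p_lt_one.le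
  induction hx using Submodule.span_induction with
  | mem x hx => exact ⟨0, by rw [pow_zero, one_smul]; exact hx⟩
  | zero => exact ⟨0, by rw [smul_zero]; exact R.zero_mem⟩
  | add x y _ _ ihx ihy =>
    obtain ⟨a, ha⟩ := ihx
    obtain ⟨b, hb⟩ := ihy
    refine ⟨a + b, ?_⟩
    rw [smul_add]
    exact R.add_mem (by rw [add_comm a b]; exact hup _ _ _ ha) (hup _ _ _ hb)
  | smul c x _ ih =>
    obtain ⟨a, ha⟩ := ih
    obtain ⟨b, hb⟩ := exists_p_pow_mul_int c
    refine ⟨b + a, ?_⟩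
    have : (p : ℚ_[p]) ^ (b + a) • c • x = ((p : ℚ_[p]) ^ b * c) • ((p : ℚ_[p]) ^ a • x) := by
      rw [smul_smul, smul_smul]; ring_nf
    rw [this]
    exact smul_mem_order hb ha

omit [IsScalarTower ℤ_[p] ℚ_[p] E] [IsScalarTower ℤ_[p] ℚ_[p] K] in
/-- Diagonal matrix units are good idempotents of `M_d(O)`. -/
lemma exists_isGoodIdempotent_of_matrix {ι : Type*} [Fintype ι] [DecidableEq ι] (i₀ : ι)
    (Φ : E ≃ₐ[ℚ_[p]] Matrix ι ι K) {O : Subalgebra ℤ_[p] K} (hp : (p : K)⁻¹ ∉ O)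
    (hO : ∀ x ∈ O, (∃ y ∈ O, x = (p : K) * y) ∨ x⁻¹ ∈ O ∧ x ≠ 0)
    {R : Subalgebra ℤ_[p] E} (hR : ∀ x, x ∈ R ↔ ∀ i j, Φ x i j ∈ O) :
    ∃ e, IsGoodIdempotent R e := by
  have hp0 : (p : K) ≠ 0 := natCast_p_ne_zero p K
  have hsmul : ∀ x i j, Φ ((p : ℚ_[p]) • x) i j = p * Φ x i j := by
    intro x i j
    rw [map_smul, Matrix.smul_apply, Algebra.smul_def, map_natCast]
  have hsingle : ∀ i j, ∀ y ∈ O, Φ.symm (Matrix.single i j y) ∈ R := by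
    intro i j y hy
    rw [hR]
    intro k l
    rw [AlgEquiv.apply_symm_apply, Matrix.single_apply]
    split_ifs
    · exact hy
    · exact O.zero_mem
  refine ⟨Φ.symm (Matrix.single i₀ i₀ 1), hsingle _ _ _ O.one_mem, ?_, ?_, ?_, ?_⟩
  · rw [← map_mul, Matrix.single_mul_single_same, one_mul]
  · rintro ⟨k, hk, h⟩
    have h1 := congrArg (fun x => Φ x i₀ i₀) h
    simp only [AlgEquiv.apply_symm_apply, hsmul, Matrix.single_apply_same] at h1
    apply hp
    rw [inv_eq_of_mul_eq_one_right h1.symm]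
    exact (hR k).1 hk _ _
  · intro x hx hxe
    have hcol : ∀ i j, j ≠ i₀ → Φ x i j = 0 := by
      intro i j hj
      rw [← hxe, map_mul, AlgEquiv.apply_symm_apply]
      exact Matrix.mul_single_apply_of_ne _ _ _ _ _ hj _
    by_cases hdiv : ∀ i, ∃ y ∈ O, Φ x i i₀ = p * y
    · left
      refine ⟨(p : ℚ_[p])⁻¹ • x, ?_, (smul_inv_smul₀ p_ne x).symm⟩
      rw [hR]
      intro i j
      have h1 := hsmul ((p : ℚ_[p])⁻¹ • x) i j
      rw [smul_inv_smul₀ p_ne] at h1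
      by_cases hj : j = i₀
      · obtain ⟨y, hy, hy'⟩ := hdiv i
        rw [hj] at h1 ⊢
        rw [hy'] at h1
        rw [← mul_left_cancel₀ hp0 h1]
        exact hy
      · rw [hcol i j hj] at h1
        rw [(mul_eq_zero.1 h1.symm).resolve_left hp0]
        exact O.zero_mem
    · right
      push Not at hdiv
      obtain ⟨i, hi⟩ := hdiv
      obtain ⟨hinv, h0⟩ := (hO _ ((hR x).1 hx i i₀)).resolve_left (by
        rintro ⟨y, hy, h⟩; exact hi y hy h)
      refine ⟨_, hsingle i₀ i _ hinv, ?_⟩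
      apply Φ.injective
      rw [map_mul, AlgEquiv.apply_symm_apply, AlgEquiv.apply_symm_apply]
      ext k l
      by_cases hk : k = i₀
      · subst hk
        rw [Matrix.single_mul_apply_same]
        by_cases hl : l = k
        · rw [hl, inv_mul_cancel₀ h0, Matrix.single_apply_same]
        · rw [hcol i l hl, mul_zero, Matrix.single_apply_of_ne]
          exact fun h => hl h.2.symm
      · rw [Matrix.single_mul_apply_of_ne _ _ _ _ _ hk, Matrix.single_apply_of_ne]
        exact fun h => hk h.1.symm
  · intro x hx
    rw [hR]
    intro i j
    have h1 := (hR _).1 (hx _ (hsingle j i₀ 1 O.one_mem)) i i₀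
    rw [mul_assoc, ← map_mul, Matrix.single_mul_single_same, one_mul, map_mul,
      AlgEquiv.apply_symm_apply, Matrix.mul_single_apply_same, mul_one] at h1
    exact h1

/-- The order of all elements whose matrix has coefficients in `O`. -/
def matrixOrder {ι : Type*} [Fintype ι] [DecidableEq ι]
    (Φ : E ≃ₐ[ℚ_[p]] Matrix ι ι K) (O : Subalgebra ℤ_[p] K) : Subalgebra ℤ_[p] E where
  carrier := {x | ∀ i j, Φ x i j ∈ O}
  mul_mem' := by
    intro x y hx hy i j
    rw [map_mul, Matrix.mul_apply]
    exact O.sum_mem fun k _ => O.mul_mem (hx i k) (hy k j)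
  add_mem' := by
    intro x y hx hy i j
    rw [map_add]
    exact O.add_mem (hx i j) (hy i j)
  algebraMap_mem' := by
    intro r i j
    rw [IsScalarTower.algebraMap_apply ℤ_[p] ℚ_[p] E, AlgEquiv.commutes,
      Matrix.algebraMap_matrix_apply]
    split_ifs
    · rw [← IsScalarTower.algebraMap_apply]; exact O.algebraMap_mem r
    · exact O.zero_mem

lemma isOrderZp_matrixOrder {ι : Type*} [Fintype ι] [DecidableEq ι]
    (Φ : E ≃ₐ[ℚ_[p]] Matrix ι ι K) {O : Subalgebra ℤ_[p] K} (hO : IsUnramifiedIntegers O) :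
    IsOrderZp p E (matrixOrder Φ O) := by
  constructor
  · have hfin : Module.Finite ℤ_[p] O := Module.Finite.iff_fg.2 hO.fg
    let f : (ι → ι → O) →ₗ[ℤ_[p]] E :=
      { toFun := fun g => Φ.symm (Matrix.of fun i j => (g i j : K))
        map_add' := by
          intro g h
          rw [← map_add]
          rfl
        map_smul' := by
          intro c g
          rw [RingHom.id_apply, ← algebraMap_smul ℚ_[p] c (Φ.symm _), ← map_smul]
          congr 1
          ext i j
          simp only [Matrix.of_apply, Matrix.smul_apply, Pi.smul_apply, Subalgebra.coe_smul,
            algebraMap_smul] }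
    have : Subalgebra.toSubmodule (matrixOrder Φ O) = LinearMap.range f := by
      ext x
      constructor
      · intro hx
        refine ⟨fun i j => ⟨_, hx i j⟩, ?_⟩
        exact Φ.symm_apply_apply x
      · rintro ⟨g, rfl⟩ i j
        change Φ (Φ.symm (Matrix.of fun i j => (g i j : K))) i j ∈ O
        rw [AlgEquiv.apply_symm_apply]
        exact (g i j).2
    rw [this]
    exact Module.Finite.iff_fg.1 (Module.Finite.range f)
  · rw [eq_top_iff]
    intro x _
    choose k hk using fun ij : ι × ι => hO.frac (Φ x ij.1 ij.2)
    have h1 : (p : ℚ_[p]) ^ (∑ ij, k ij) • x ∈ matrixOrder Φ O := by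
      intro i j
      rw [map_smul, Matrix.smul_apply, Algebra.smul_def, map_pow, map_natCast,
        ← Finset.sum_erase_add _ _ (Finset.mem_univ (i, j)), pow_add, mul_assoc]
      exact O.mul_mem (O.pow_mem (natCast_mem O p) _) (hk (i, j))
    have h2 : x = ((p : ℚ_[p]) ^ (∑ ij, k ij))⁻¹ • (p : ℚ_[p]) ^ (∑ ij, k ij) • x :=
      (inv_smul_smul₀ (pow_ne_zero _ p_ne) x).symm
    rw [h2]
    exact Submodule.smul_mem _ _ (Submodule.subset_span h1)

/-- A maximal order of a matrix algebra over an unramified extension contains a good idempotent: it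
is the full ring of integral matrices with respect to a basis of the lattice generated by the images
of the standard basis vectors under the order, because it stabilizes this lattice. -/
lemma exists_isGoodIdempotent [FiniteDimensional ℚ_[p] K] {O : Subalgebra ℤ_[p] K}
    (hO : IsUnramifiedIntegers O) {d : ℕ} (hd : 0 < d)
    (Φ : E ≃ₐ[ℚ_[p]] Matrix (Fin d) (Fin d) K) {R : Subalgebra ℤ_[p] E} (hR : IsOrderZp p E R)
    (hRmax : ∀ R' : Subalgebra ℤ_[p] E, IsOrderZp p E R' → R ≤ R' → R' = R) :
    ∃ e, IsGoodIdempotent R e := by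
  classical
  have hpid := hO.isPrincipalIdealRing
  have hfr := hO.isFractionRing
  let act : E →ₐ[ℚ_[p]] Module.End K (Fin d → K) :=
    (Matrix.toLinAlgEquiv' (R := K) (n := Fin d)).toAlgHom.restrictScalars ℚ_[p] |>.comp Φ.toAlgHom
  have hactΦ : ∀ x, act x = Matrix.toLin' (Φ x) := fun _ => rfl
  let L : Submodule O (Fin d → K) :=
    Submodule.span O {v | ∃ r ∈ R, ∃ i, v = act r (Pi.single i 1)}
  -- `L` is an `R`-stable `O`-lattice in `K^d`, free because `O` is a principal ideal domain
  have hLstab : ∀ r ∈ R, ∀ v ∈ L, act r v ∈ L := by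
    intro r hr v hv
    induction hv using Submodule.span_induction with
    | mem v hv =>
      obtain ⟨s, hs, i, rfl⟩ := hv
      refine Submodule.subset_span ⟨r * s, R.mul_mem hr hs, i, ?_⟩
      rw [map_mul]; rfl
    | zero => rw [map_zero]; exact L.zero_mem
    | add v w _ _ hv hw => rw [map_add]; exact L.add_mem hv hw
    | smul c v _ hv =>
      rw [LinearMap.map_smul_of_tower]
      exact L.smul_mem _ hv
  obtain ⟨S, hS⟩ := hR.1
  have hLfg : L.FG := by
    let T : Finset (Fin d → K) :=
      (S ×ˢ (Finset.univ : Finset (Fin d))).image fun q => act q.1 (Pi.single q.2 1)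
    refine ⟨T, le_antisymm (Submodule.span_mono ?_) (Submodule.span_le.2 ?_)⟩
    · intro v hv
      simp only [T, Finset.coe_image, Set.mem_image] at hv
      obtain ⟨q, hq, rfl⟩ := hv
      have hq' := (Finset.mem_product.1 hq).1
      refine ⟨q.1, ?_, q.2, rfl⟩
      have : q.1 ∈ Subalgebra.toSubmodule R := hS ▸ Submodule.subset_span hq'
      exact this
    · rintro v ⟨r, hr, i, rfl⟩
      have hr' : r ∈ Submodule.span ℤ_[p] (S : Set E) := hS ▸ hr
      induction hr' using Submodule.span_induction with
      | mem s hs =>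
        apply Submodule.subset_span
        simp only [T, Finset.coe_image, Set.mem_image]
        exact ⟨(s, i), Finset.mem_product.2 ⟨hs, Finset.mem_univ _⟩, rfl⟩
      | zero => rw [map_zero]; exact Submodule.zero_mem _
      | add x y hx hy ihx ihy =>
        have hx' : x ∈ Subalgebra.toSubmodule R := hS ▸ hx
        have hy' : y ∈ Subalgebra.toSubmodule R := hS ▸ hy
        rw [map_add]
        exact Submodule.add_mem _ (ihx hx') (ihy hy')
      | smul c x hx ihx =>
        have hx' : x ∈ Subalgebra.toSubmodule R := hS ▸ hx
        have h1 : act (c • x) (Pi.single i 1) =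
            (algebraMap ℤ_[p] O c) • act x (Pi.single i 1) := by
          rw [← algebraMap_smul ℚ_[p] c x, map_smul, LinearMap.smul_apply]
          ext j
          rw [Pi.smul_apply, Pi.smul_apply, algebraMap_smul, algebraMap_smul]
        rw [h1]
        exact Submodule.smul_mem _ _ (ihx hx')
  have hLspan : Submodule.span K (L : Set (Fin d → K)) = ⊤ := by
    rw [eq_top_iff, ← (Pi.basisFun K (Fin d)).span_eq, Submodule.span_le]
    rintro _ ⟨i, rfl⟩
    refine Submodule.subset_span (Submodule.subset_span ⟨1, R.one_mem, i, ?_⟩)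
    rw [map_one, Pi.basisFun_apply]; rfl
  have hLlat : Submodule.IsLattice K L := ⟨hLfg, hLspan⟩
  let β := Module.Free.chooseBasis O L
  let b := β.extendOfIsLattice K
  have hb : ∀ i, b i = (β i : Fin d → K) := fun i =>
    Module.Basis.extendOfIsLattice_apply K β i
  have hrepr : ∀ v ∈ L, ∀ i, b.repr v i ∈ O := by
    intro v hv i
    have h1 : v = ∑ j, ((β.repr ⟨v, hv⟩ j : O) : K) • b j := by
      have h2 := congrArg Subtype.val (β.sum_repr ⟨v, hv⟩)
      rw [Submodule.coe_sum] at h2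
      refine h2.symm.trans (Finset.sum_congr rfl fun j _ => ?_)
      rw [hb]; rfl
    have h3 : b.repr v i = (β.repr ⟨v, hv⟩ i : O) := by
      conv_lhs => rw [h1]
      rw [b.repr_sum_self]
    rw [h3]
    exact Subtype.prop _
  let Ψ : E ≃ₐ[ℚ_[p]] Matrix _ _ K := Φ.trans
    (((Matrix.toLinAlgEquiv' (R := K) (n := Fin d)).trans
      (LinearMap.toMatrixAlgEquiv b)).restrictScalars ℚ_[p])
  have hΨ : ∀ x i j, Ψ x i j = b.repr (act x (b j)) i := fun x i j =>
    LinearMap.toMatrixAlgEquiv_apply b (act x) i j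
  have hle : R ≤ matrixOrder Ψ O := by
    intro x hx i j
    rw [hΨ]
    exact hrepr _ (hLstab x hx _ (by rw [hb]; exact (β j).2)) i
  have hRe : matrixOrder Ψ O = R := hRmax _ (isOrderZp_matrixOrder Ψ hO) hle
  have : Nonempty (Fin d) := ⟨⟨0, hd⟩⟩
  obtain ⟨i₀⟩ := b.index_nonempty
  exact exists_isGoodIdempotent_of_matrix i₀ Ψ hO.inv_p_notMem hO.dich
    (fun x => by rw [← hRe]; rfl)

end
end LocalSplit

/-! ### Algebras with several factors -/

namespace LocalSplit
section
variable {p : ℕ} [Fact p.Prime] {E : Type*} [Ring E] [Algebra ℚ_[p] E]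
    [Algebra ℤ_[p] E] [IsScalarTower ℤ_[p] ℚ_[p] E] {dag : E → E} {R : Subalgebra ℤ_[p] E}

omit [Algebra ℤ_[p] E] [IsScalarTower ℤ_[p] ℚ_[p] E] in
/-- In a simple algebra with involution, the involution exchanges the two factors of any
nontrivial decomposition of the algebra. -/
lemma dag_central_idempotent (hdag : IsInvolutionQp p E dag)
    (hsimple : ∀ I : TwoSidedIdeal E, (∀ x ∈ I, dag x ∈ I) → I = ⊥ ∨ I = ⊤)
    {e : E} (he : e * e = e) (hcen : ∀ x, e * x = x * e) (h0 : e ≠ 0) (h1 : e ≠ 1) :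
    dag e = 1 - e := by
  obtain ⟨hadd, hmul, hinv, hsc⟩ := id hdag
  -- `{x | f x = x}` is a `†`-stable two-sided ideal
  have key : ∀ f : E, f * f = f → (∀ x, f * x = x * f) → dag f = f → f = 0 ∨ f = 1 := by
    intro f hf hcf hdf
    let I : TwoSidedIdeal E := TwoSidedIdeal.mk' {x | f * x = x} (mul_zero f)
      (by intro x y hx hy; simp only [Set.mem_ofPred_eq] at *; rw [mul_add, hx, hy])
      (by intro x hx; simp only [Set.mem_ofPred_eq] at *; rw [mul_neg, hx])
      (by intro x y hy; simp only [Set.mem_ofPred_eq] at *; rw [← mul_assoc, hcf, mul_assoc, hy])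
      (by intro x y hx; simp only [Set.mem_ofPred_eq] at *; rw [← mul_assoc, hx])
    have hI : ∀ x, x ∈ I ↔ f * x = x := fun x => TwoSidedIdeal.mem_mk' _ _ _ _ _ _ _
    rcases hsimple I (by
      intro x hx
      rw [hI] at hx ⊢
      rw [hcf]
      nth_rw 1 [← hdf]
      rw [← hmul, hx]) with h | h
    · left
      have : f ∈ I := (hI f).2 hf
      rw [h] at this
      exact this
    · right
      have : (1 : E) ∈ I := h ▸ trivial
      rw [hI, mul_one] at this
      exact this
  have hcd : ∀ x, dag e * x = x * dag e := by
    intro x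
    rw [← hinv x, ← hmul, ← hmul, hcen]
  have hdd : dag e * dag e = dag e := by rw [← hmul, he]
  have hz : e * dag e = 0 := by
    refine (key (e * dag e) ?_ ?_ ?_).resolve_right ?_
    · rw [mul_assoc, ← mul_assoc (dag e), hcd e, ← mul_assoc, ← mul_assoc, he, mul_assoc, hdd]
    · intro x
      rw [mul_assoc, hcd x, ← mul_assoc, hcen x, mul_assoc]
    · rw [hmul, hinv]
    · intro h
      apply h1
      have : e * (e * dag e) = e * dag e := by rw [← mul_assoc, he]
      rwa [h, mul_one] at this
  have hz' : dag e * e = 0 := by rw [hcd, hz]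
  have hs : e + dag e = 1 := by
    refine (key (e + dag e) ?_ ?_ ?_).resolve_left ?_
    · rw [add_mul, mul_add, mul_add, he, hz, hz', hdd, add_zero, zero_add]
    · intro x
      rw [add_mul, mul_add, hcen, hcd]
    · rw [hadd, hinv, add_comm]
    · intro h
      apply h0
      have : e * (e + dag e) = e := by rw [mul_add, he, hz, add_zero]
      rw [← this, h, mul_zero]
  rw [← hs, add_sub_cancel_left]

/-- A maximal order contains every central idempotent. -/
lemma central_idempotent_mem (hR : IsOrderZp p E R)
    (hRmax : ∀ R' : Subalgebra ℤ_[p] E, IsOrderZp p E R' → R ≤ R' → R' = R)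
    {e : E} (he : e * e = e) (hcen : ∀ x, e * x = x * e) : e ∈ R := by
  -- `R + eR` is an order
  have hsub : ∀ x ∈ R, ∃ a ∈ R, ∃ b ∈ R, x = a + e * b := fun x hx =>
    ⟨x, hx, 0, R.zero_mem, by rw [mul_zero, add_zero]⟩
  let R' : Subalgebra ℤ_[p] E :=
    { carrier := {x | ∃ a ∈ R, ∃ b ∈ R, x = a + e * b}
      mul_mem' := by
        rintro _ _ ⟨a, ha, b, hb, rfl⟩ ⟨c, hc, d, hd, rfl⟩
        refine ⟨a * c, R.mul_mem ha hc, a * d + b * c + b * d,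
          R.add_mem (R.add_mem (R.mul_mem ha hd) (R.mul_mem hb hc)) (R.mul_mem hb hd), ?_⟩
        have h1 : a * (e * d) = e * (a * d) := by rw [← mul_assoc, ← hcen, mul_assoc]
        have h2 : e * b * (e * d) = e * (b * d) := by
          rw [mul_assoc, ← mul_assoc b, ← hcen, mul_assoc, ← mul_assoc, he]
        rw [add_mul, mul_add, mul_add, h1, h2, mul_add, mul_add, mul_assoc]
        abel
      add_mem' := by
        rintro _ _ ⟨a, ha, b, hb, rfl⟩ ⟨c, hc, d, hd, rfl⟩
        exact ⟨a + c, R.add_mem ha hc, b + d, R.add_mem hb hd, by rw [mul_add]; abel⟩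
      algebraMap_mem' := fun r => hsub _ (R.algebraMap_mem r) }
  have hle : R ≤ R' := hsub
  have hord : IsOrderZp p E R' := by
    constructor
    · have : Subalgebra.toSubmodule R' = Subalgebra.toSubmodule R ⊔
          (Subalgebra.toSubmodule R).map (LinearMap.mulLeft ℤ_[p] e) := by
        ext x
        rw [Submodule.mem_sup]
        constructor
        · rintro ⟨a, ha, b, hb, rfl⟩
          exact ⟨a, ha, e * b, ⟨b, hb, rfl⟩, rfl⟩
        · rintro ⟨a, ha, _, ⟨b, hb, rfl⟩, rfl⟩
          exact ⟨a, ha, b, hb, rfl⟩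
      rw [this]
      exact hR.1.sup (hR.1.map _)
    · rw [eq_top_iff, ← hR.2]
      exact Submodule.span_mono hle
  rw [← hRmax R' hord hle]
  exact ⟨0, R.zero_mem, 1, R.one_mem, by rw [mul_one, zero_add]⟩

/-- When the involution exchanges two factors, `b = (c q⁻¹, 1)` solves `b† q b = c`. -/
lemma exists_solution_of_central_idempotent (hdag : IsInvolutionQp p E dag)
    {q qi e : E} (hqi : q * qi = 1) (hiq : qi * q = 1) (hq : dag q = q) {c : ℚ_[p]}
    (hc : c • qi ∈ R) (heR : e ∈ R) (he : e * e = e) (hcen : ∀ x, e * x = x * e)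
    (hde : dag e = 1 - e) :
    ∃ b ∈ R, dag b * q * b = algebraMap ℚ_[p] E c := by
  obtain ⟨hadd, hmul, hinv, hsc⟩ := id hdag
  have hqid : dag qi = qi := by
    calc dag qi = dag qi * (q * qi) := by rw [hqi, mul_one]
      _ = dag qi * dag q * qi := by rw [hq, mul_assoc]
      _ = qi := by rw [← hmul, hqi, dag_one hdag, one_mul]
  refine ⟨(c • qi) * e + (1 - e), R.add_mem (R.mul_mem hc heR) (R.sub_mem R.one_mem heR), ?_⟩
  have hdb : dag ((c • qi) * e + (1 - e)) = c • (qi * (1 - e)) + e := by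
    rw [hadd, hmul, dag_smul hdag, hqid, dag_sub hdag, dag_one hdag, hde, sub_sub_cancel,
      mul_smul_comm, sub_mul, mul_sub, hcen, one_mul, mul_one]
  have h1 : (c • (qi * (1 - e)) + e) * q = c • (1 - e) + q * e := by
    rw [add_mul, smul_mul_assoc, mul_assoc, sub_mul, hcen, one_mul, mul_sub, hiq,
      ← mul_assoc, hiq, one_mul]
  have h2 : (1 - e) * (qi * e) = 0 := by
    rw [← hcen, ← mul_assoc, sub_mul, he, one_mul, sub_self, zero_mul]
  have h3 : q * e * (qi * e) = e := by
    rw [mul_assoc, ← mul_assoc e, hcen, mul_assoc, he, ← mul_assoc, hqi, one_mul]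
  have h4 : e * (1 - e) = 0 := by rw [mul_sub, mul_one, he, sub_self]
  have h5 : (1 - e) * (1 - e) = 1 - e := by rw [sub_mul, h4, one_mul, sub_zero]
  rw [hdb, h1, add_mul, mul_add, mul_add]
  simp only [smul_mul_assoc, mul_smul_comm]
  rw [h2, h3, h5, mul_assoc q, h4, mul_zero, smul_zero, smul_zero, zero_add, add_zero, ← smul_add,
    sub_add_cancel, Algebra.algebraMap_eq_smul_one]

end
end LocalSplit

/-! ### Integral solutions -/

/-- **Existence of integral solutions of `b† q b = m'` over a split simple `ℚ_p`-algebra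
with involution** (the main step of the split local case of the degree bound). -/
theorem partial_bound_local_split
    (p : ℕ) [Fact p.Prime] (hodd : p ≠ 2)
    (E : Type*) [Ring E] [Nontrivial E] [Algebra ℚ_[p] E] [FiniteDimensional ℚ_[p] E]
    [Algebra ℤ_[p] E] [IsScalarTower ℤ_[p] ℚ_[p] E]
    (dag : E → E) (hdag : IsInvolutionQp p E dag)
    -- `(E, †)` is simple as an algebra with involution
    (hsimple : ∀ I : TwoSidedIdeal E, (∀ x ∈ I, dag x ∈ I) → I = ⊥ ∨ I = ⊤)
    -- `E` is split with unramified centre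
    (hsplit : Nonempty (UnramifiedSplitting p E))
    -- `R` is a `†`-stable maximal order in `E`
    (R : Subalgebra ℤ_[p] E) (hR : IsOrderZp p E R)
    (hRmax : ∀ R' : Subalgebra ℤ_[p] E, IsOrderZp p E R' → R ≤ R' → R' = R)
    (hRdag : ∀ x ∈ R, dag x ∈ R)
    -- `q ∈ R` is invertible in `E`, with inverse `qi`
    (q : E) (hqR : q ∈ R) (qi : E) (hqi : q * qi = 1) (hiq : qi * q = 1)
    -- `a† q a = m ∈ ℚ_p^×`
    (a : E) (m : ℚ_[p]) (hm : m ≠ 0) (ha : dag a * q * a = algebraMap ℚ_[p] E m)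
    -- `m' ∈ ℤ_p \ {0}` with `m'·q⁻¹ ∈ R` and `m'·m⁻¹` a square in `ℚ_p^×`
    (m' : ℤ_[p]) (hm' : m' ≠ 0)
    (hm'qi : (m' : ℚ_[p]) • qi ∈ R)
    (hm'm : ∃ u : ℚ_[p], u ≠ 0 ∧ (m' : ℚ_[p]) = u ^ 2 * m) :
    ∃ b ∈ R, dag b * q * b = algebraMap ℚ_[p] E (m' : ℚ_[p]) := by
  obtain ⟨hadd, hmul, hinv, hsc⟩ := id hdag
  obtain ⟨u, hu, hum⟩ := hm'm
  have : IsArtinianRing E := IsArtinianRing.of_finite ℚ_[p] E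
  obtain ⟨c, hcdef⟩ : ∃ c : ℚ_[p], c = m' := ⟨_, rfl⟩
  rw [← hcdef] at hum hm'qi ⊢
  have hc0 : c ≠ 0 := by rw [hum]; exact mul_ne_zero (pow_ne_zero _ hu) hm
  -- rescale `a` so that it represents `m'` itself
  obtain ⟨a', ha'⟩ : ∃ a', dag a' * q * a' = c • (1 : E) := by
    refine ⟨u • a, ?_⟩
    rw [LocalSplit.dag_smul hdag, smul_mul_assoc, smul_mul_assoc, mul_smul_comm, ha,
      Algebra.algebraMap_eq_smul_one, smul_smul, smul_smul, hum]
    ring_nf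
  -- one-sided inverses in the finite-dimensional algebra `E` are two-sided
  have haa : a' * dag a' = c • qi := by
    have h1 : (c⁻¹ • (dag a' * q)) * a' = 1 := by
      rw [smul_mul_assoc, ha', inv_smul_smul₀ hc0]
    have h2 := mul_eq_one_comm.1 h1
    rw [mul_smul_comm, ← mul_assoc] at h2
    have h3 : a' * dag a' * q = c • (1 : E) := by rw [← h2, smul_inv_smul₀ hc0]
    calc a' * dag a' = a' * dag a' * q * qi := by rw [mul_assoc _ q, hqi, mul_one]
      _ = c • qi := by rw [h3, smul_mul_assoc, one_mul]
  obtain ⟨S⟩ := hsplit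
  let _ := S.fieldK
  let _ := S.algK
  have := S.finK
  -- either there are two factors, exchanged by the involution, or `E` is a matrix algebra
  by_cases hn : ∃ i j : Fin S.n, i ≠ j
  · obtain ⟨i, j, hij⟩ := hn
    classical
    have : ∀ i, Nonempty (Fin (S.d i)) := fun i => ⟨⟨0, S.dpos i⟩⟩
    let ε : ∀ i, Matrix (Fin (S.d i)) (Fin (S.d i)) (S.K i) := Pi.single i 1
    have hε : ε * ε = ε := by
      rw [← Pi.single_mul, mul_one]
    have hεc : ∀ x, ε * x = x * ε := by
      intro x
      ext1 k
      by_cases hk : k = i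
      · subst hk; simp [ε]
      · simp [ε, hk]
    have hεi : ε i = 1 := Pi.single_eq_same _ _
    have hεj : ε j = 0 := Pi.single_eq_of_ne hij.symm _
    have he : S.equiv.symm ε * S.equiv.symm ε = S.equiv.symm ε := by rw [← map_mul, hε]
    have hcen : ∀ x, S.equiv.symm ε * x = x * S.equiv.symm ε := by
      intro x
      apply S.equiv.injective
      rw [map_mul, map_mul, AlgEquiv.apply_symm_apply, hεc]
    have hde := LocalSplit.dag_central_idempotent hdag hsimple he hcen
      (by
        intro h
        have h2 := congrArg S.equiv h
        rw [AlgEquiv.apply_symm_apply, map_zero] at h2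
        rw [h2] at hεi
        exact zero_ne_one hεi)
      (by
        intro h
        have h2 := congrArg S.equiv h
        rw [AlgEquiv.apply_symm_apply, map_one] at h2
        rw [h2] at hεj
        exact one_ne_zero hεj)
    have hq : dag q = q := by
      have h1 : dag (c • qi) = c • qi := by rw [← haa, hmul, hinv]
      rw [LocalSplit.dag_smul hdag] at h1
      have h2 : dag qi = qi := smul_right_injective E hc0 h1
      calc dag q = dag q * (qi * q) := by rw [hiq, mul_one]
        _ = dag q * dag qi * q := by rw [h2, mul_assoc]
        _ = q := by rw [← hmul, hiq, LocalSplit.dag_one hdag, one_mul]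
    exact LocalSplit.exists_solution_of_central_idempotent hdag hqi hiq hq hm'qi
      (LocalSplit.central_idempotent_mem hR hRmax he hcen) he hcen hde
  · push Not at hn
    have hne : Nonempty (Fin S.n) := by
      by_contra h
      rw [not_nonempty_iff] at h
      have := S.equiv.injective.subsingleton
      exact not_subsingleton E this
    obtain ⟨i⟩ := hne
    let ev : (∀ i, Matrix (Fin (S.d i)) (Fin (S.d i)) (S.K i)) →ₐ[ℚ_[p]]
      Matrix (Fin (S.d i)) (Fin (S.d i)) (S.K i) := Pi.evalAlgHom ℚ_[p] _ i
    have hev : Function.Bijective ev := by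
      constructor
      · intro x y hxy
        ext1 k
        rw [hn k i]
        exact hxy
      · exact Function.surjective_eval i
    let Φ := S.equiv.trans (AlgEquiv.ofBijective ev hev)
    let _ : Algebra ℤ_[p] (S.K i) :=
      ((algebraMap ℚ_[p] (S.K i)).comp (algebraMap ℤ_[p] ℚ_[p])).toAlgebra
    have : IsScalarTower ℤ_[p] ℚ_[p] (S.K i) := IsScalarTower.of_algebraMap_eq' rfl
    obtain ⟨k, ζ, hk0, hk, hζ, htop⟩ := S.unramK i
    obtain ⟨e, he⟩ := LocalSplit.exists_isGoodIdempotent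
      (LocalSplit.isUnramifiedIntegers_adjoin hk0 hk hζ htop) (S.dpos i) Φ hR hRmax
    obtain ⟨s, hs, hsR⟩ := LocalSplit.exists_isometry hodd hdag hRdag hR.1
      (LocalSplit.exists_pow_smul_mem_order hR) he (dag a') (by rwa [hinv, haa])
    have hs' : s * dag s = 1 := mul_eq_one_comm.1 hs
    refine ⟨dag (s * dag a'), hRdag _ hsR, ?_⟩
    calc dag (dag (s * dag a')) * q * dag (s * dag a')
        = s * (dag a' * q * a') * dag s := by
          rw [hinv, hmul, hinv]; simp only [mul_assoc]
      _ = algebraMap ℚ_[p] E c := by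
          rw [ha', mul_smul_comm, smul_mul_assoc, mul_one, hs', Algebra.algebraMap_eq_smul_one]
end
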